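/- arXiv:1406.1294 — 9 statements merged into one kernel-verified Lean document; each statement's English description precedes it below -/
import Mathlib

section
/- Let (L_k)_{k≥1} be an increasing sequence of positive integers tending to infinity. Then there exist a real number ν with 0 < ν < 1/2 and sequences (p_k)_{k≥1}, (q_k)_{k≥1} of positive integers such that the three real numbers e, 1, ν are linearly independent over ℚ, and for every k ≥ 1 one has |q_k·ν − p_k − e| ≤ Δ(p_k,q_k)^{(p_k+q_k)·L_k}, where Δ(p_k,q_k) denotes the minimum of 1/2 and of all values |q·ν − p − r·e| over triples of integers (p,q,r) with 0 < |r| + |q| < 3(q_k+1) and (p,q,r) ∉ {(0,0,0), (p_k,q_k,1), −(p_k,q_k,1), 2(p_k,q_k,1), −2(p_k,q_k,1)}. -/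
open Filter Topology

lemma aux_exp_ne (A : ℕ) (hA : 0 < A) (b : ℤ) : (A : ℝ) * Real.exp 1 ≠ b := by
  intro h
  have hint : ((∑ m ∈ Finset.range (A + 1), A.factorial / m.factorial : ℕ) : ℝ)
      = A.factorial * ∑ m ∈ Finset.range (A + 1), (1 : ℝ) ^ m / m.factorial := by
    rw [Nat.cast_sum, Finset.mul_sum]
    refine Finset.sum_congr rfl fun m hm => ?_
    have hm' : m ≤ A := by simpa [Nat.lt_succ_iff] using hm
    rw [Nat.cast_div (Nat.factorial_dvd_factorial hm') (by positivity)]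
    simp [div_eq_mul_inv]
  set N := (∑ m ∈ Finset.range (A + 1), A.factorial / m.factorial : ℕ) with hN
  set S := ∑ m ∈ Finset.range (A + 1), (1 : ℝ) ^ m / m.factorial with hS
  have h1 : Real.exp 1 ≤ S + (1 : ℝ) ^ (A + 1) * (((A + 1 : ℕ) : ℝ) + 1) /
      ((A + 1).factorial * ((A + 1 : ℕ) : ℝ)) :=
    Real.exp_bound' zero_le_one le_rfl (Nat.succ_pos A)
  have h2 : ∑ m ∈ Finset.range (A + 2), (1 : ℝ) ^ m / m.factorial ≤ Real.exp 1 :=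
    Real.sum_le_exp_of_nonneg zero_le_one _
  rw [Finset.sum_range_succ, ← hS] at h2
  have hF : (0 : ℝ) < A.factorial := by positivity
  have hA' : (0 : ℝ) < A := by exact_mod_cast hA
  have h3 : S < Real.exp 1 := by
    have : (0 : ℝ) < 1 ^ (A + 1) / (A + 1).factorial := by positivity
    linarith
  have h4 : (A : ℝ) * A.factorial * (Real.exp 1 - S) < 1 := by
    have h5 : Real.exp 1 - S ≤ (A + 2) / ((A + 1) * A.factorial * (A + 1)) := by
      rw [Nat.factorial_succ] at h1
      push_cast at h1
      rw [one_pow, one_mul] at h1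
      have : (A : ℝ) + 1 + 1 = A + 2 := by ring
      rw [this] at h1
      linarith
    calc (A : ℝ) * A.factorial * (Real.exp 1 - S)
        ≤ A * A.factorial * ((A + 2) / ((A + 1) * A.factorial * (A + 1))) := by gcongr
      _ = A * (A + 2) / ((A + 1) * (A + 1)) := by field_simp
      _ < 1 := by rw [div_lt_one (by positivity)]; nlinarith
  have h6 : (0 : ℝ) < A * A.factorial * (Real.exp 1 - S) := by
    have := sub_pos.2 h3
    positivity
  have h7 : (A : ℝ) * A.factorial * (Real.exp 1 - S)
      = ((A.factorial * b - A * N : ℤ) : ℝ) := by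
    push_cast
    rw [hint, ← h]; ring
  rw [h7] at h4 h6
  have h4' : (A.factorial * b - A * N : ℤ) < 1 := by exact_mod_cast h4
  have h6' : 0 < (A.factorial * b - A * N : ℤ) := by exact_mod_cast h6
  omega

lemma aux_exp_indep (a b : ℤ) (h : (a : ℝ) * Real.exp 1 + b = 0) : a = 0 ∧ b = 0 := by
  have ha : a = 0 := by
    rcases lt_trichotomy a 0 with h0 | h0 | h0
    · exfalso
      apply aux_exp_ne a.natAbs (by omega) b
      rw [Nat.cast_natAbs, abs_of_neg h0]
      push_cast
      linarith
    · exact h0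
    · exfalso
      apply aux_exp_ne a.natAbs (by omega) (-b)
      rw [Nat.cast_natAbs, abs_of_pos h0]
      push_cast
      linarith
  subst ha
  refine ⟨rfl, ?_⟩
  simpa using h

lemma aux_lower (B : ℤ) : ∃ δ : ℝ, 0 < δ ∧ ∀ a b : ℤ, |b| ≤ B → ¬ (a = 0 ∧ b = 0) →
    δ ≤ |(b : ℝ) * Real.exp 1 + a| := by
  have key : ∀ b : ℤ, ∃ δ : ℝ, 0 < δ ∧ ∀ a : ℤ, ¬ (a = 0 ∧ b = 0) →
      δ ≤ |(b : ℝ) * Real.exp 1 + a| := by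
    intro b
    by_cases hb : b = 0
    · refine ⟨1, one_pos, fun a ha => ?_⟩
      have : a ≠ 0 := fun h => ha ⟨h, hb⟩
      have : 1 ≤ |a| := Int.one_le_abs this
      subst hb
      simp only [Int.cast_zero, zero_mul, zero_add]
      exact_mod_cast this
    · refine ⟨|(b : ℝ) * Real.exp 1 - round ((b : ℝ) * Real.exp 1)|, ?_, fun a _ => ?_⟩
      · rw [abs_pos]
        intro h
        apply hb
        refine (aux_exp_indep b (-round ((b : ℝ) * Real.exp 1)) ?_).1
        push_cast
        linarith
      · have := round_le ((b : ℝ) * Real.exp 1) (-a)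
        push_cast at this
        rwa [sub_neg_eq_add] at this
  have ev : ∀ᶠ δ in 𝓝[>] (0 : ℝ), ∀ b ∈ Finset.Icc (-B) B, ∀ a : ℤ, ¬ (a = 0 ∧ b = 0) →
      δ ≤ |(b : ℝ) * Real.exp 1 + a| := by
    rw [Filter.eventually_all_finset]
    intro b _
    obtain ⟨δ, h0, h⟩ := key b
    filter_upwards [Ioo_mem_nhdsGT h0] with x hx a ha
    exact hx.2.le.trans (h a ha)
  obtain ⟨δ, h, h0⟩ := (ev.and self_mem_nhdsWithin).exists
  exact ⟨δ, h0, fun a b hb => h b (by rw [Finset.mem_Icc]; exact abs_le.1 hb) a⟩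

/-- The approximation property at one stage. -/
def AuxGood (l : ℕ) (ν : ℝ) (p q : ℕ) : Prop :=
  |(q : ℝ) * ν - (p : ℝ) - Real.exp 1| ≤
          (sInf (insert (1 / 2 : ℝ)
            {x : ℝ | ∃ P Q R : ℤ, 0 < |R| + |Q| ∧ |R| + |Q| < 3 * ((q : ℤ) + 1) ∧
              (P, Q, R) ≠ (0, 0, 0) ∧
              (P, Q, R) ≠ ((p : ℤ), (q : ℤ), 1) ∧
              (P, Q, R) ≠ (-(p : ℤ), -(q : ℤ), -1) ∧
              (P, Q, R) ≠ (2 * (p : ℤ), 2 * (q : ℤ), 2) ∧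
              (P, Q, R) ≠ (-(2 * (p : ℤ)), -(2 * (q : ℤ)), -2) ∧
              x = |(Q : ℝ) * ν - (P : ℝ) - (R : ℝ) * Real.exp 1|})) ^ ((p + q) * l)

lemma aux_nhds (l p q : ℕ) (hq : 0 < q) :
    ∀ᶠ ν in 𝓝 (((p : ℝ) + Real.exp 1) / q), AuxGood l ν p q := by
  have hq' : (0 : ℝ) < q := by exact_mod_cast hq
  set ν₀ := ((p : ℝ) + Real.exp 1) / q with hν₀
  have hqν : (q : ℝ) * ν₀ = p + Real.exp 1 := by rw [hν₀]; field_simp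
  obtain ⟨δ, hδ, hlow⟩ := aux_lower (3 * ((q : ℤ) + 1) * (q + 1))
  set m : ℝ := min (1 / 2) (δ / q / 2) with hm
  have hm0 : 0 < m := by rw [hm]; positivity
  have hη : 0 < min (m ^ ((p + q) * l) / q) (δ / q / 2 / (3 * (q + 1))) := by positivity
  filter_upwards [Metric.ball_mem_nhds ν₀ hη] with ν hν
  rw [Metric.mem_ball, Real.dist_eq, lt_min_iff, lt_div_iff₀ hq', lt_div_iff₀ (by positivity)] at hν
  unfold AuxGood
  have e1 : (q : ℝ) * ν - p - Real.exp 1 = (ν - ν₀) * q := by linear_combination hqν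
  rw [e1, abs_mul, abs_of_pos hq']
  refine hν.1.le.trans (pow_le_pow_left₀ hm0.le ?_ _)
  refine le_csInf (Set.insert_nonempty _ _) ?_
  rintro x (rfl | ⟨P, Q, R, h0, hB, -, n1, n2, n3, n4, rfl⟩)
  · exact min_le_left _ _
  refine (min_le_right _ _).trans ?_
  have hQB : |Q| ≤ 3 * ((q : ℤ) + 1) := by have := abs_nonneg R; omega
  have hRB : |R| ≤ 3 * ((q : ℤ) + 1) - |Q| := by omega
  have hQB' : |(Q : ℝ)| ≤ 3 * ((q : ℝ) + 1) := by exact_mod_cast hQB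
  have hb : |Q - q * R| ≤ 3 * ((q : ℤ) + 1) * (q + 1) := by
    have t1 : |Q - q * R| ≤ |Q| + |(q : ℤ) * R| := abs_sub _ _
    have t2 : |(q : ℤ) * R| = q * |R| := by rw [abs_mul, Nat.abs_cast]
    have := abs_nonneg Q
    nlinarith
  have hne : ¬ (Q * p - q * P = 0 ∧ Q - q * R = 0) := by
    rintro ⟨ha, hb⟩
    have hQ : Q = q * R := by linarith
    have hqz : (0 : ℤ) < q := by exact_mod_cast hq
    have hP : P = R * p := by
      have : (q : ℤ) * (P - R * p) = 0 := by rw [hQ] at ha; linear_combination -ha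
      rcases mul_eq_zero.1 this with h | h
      · omega
      · linarith
    have hQa : |Q| = q * |R| := by rw [hQ, abs_mul, Nat.abs_cast]
    have hR3 : |R| < 3 := by
      by_contra hcon
      push Not at hcon
      nlinarith
    have hR0 : R ≠ 0 := by
      rintro rfl
      simp [hQ] at h0
    rw [abs_lt] at hR3
    subst hQ hP
    obtain ⟨r1, r2⟩ := hR3
    have : R = -2 ∨ R = -1 ∨ R = 1 ∨ R = 2 := by omega
    rcases this with rfl | rfl | rfl | rfl
    · apply n4; ext <;> simp <;> ring
    · apply n2; ext <;> simp
    · apply n1; ext <;> simp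
    · apply n3; ext <;> simp; ring
  have hl := hlow _ _ hb hne
  have e2 : (((Q - q * R : ℤ) : ℝ) * Real.exp 1 + ((Q * p - q * P : ℤ) : ℝ))
      = ((Q : ℝ) * ν₀ - P - R * Real.exp 1) * q := by
    push_cast
    linear_combination -(Q : ℝ) * hqν
  rw [e2, abs_mul, abs_of_pos hq', ← div_le_iff₀ hq'] at hl
  have e3 : (Q : ℝ) * ν₀ - P - R * Real.exp 1 =
      ((Q : ℝ) * ν - P - R * Real.exp 1) - Q * (ν - ν₀) := by ring
  have t3 := abs_sub ((Q : ℝ) * ν - P - R * Real.exp 1) (Q * (ν - ν₀))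
  rw [← e3, abs_mul] at t3
  have t4 : |(Q : ℝ)| * |ν - ν₀| ≤ |ν - ν₀| * (3 * (q + 1)) := by
    rw [mul_comm]; gcongr
  linarith [hν.2]

lemma aux_dense (l : ℕ) :
    Dense (interior {ν | ∃ p q : ℕ, 0 < p ∧ 0 < q ∧ AuxGood l ν p q} ∪ Set.Iio (0 : ℝ)) := by
  rw [Metric.dense_iff]
  intro x r hr
  rcases lt_or_ge x 0 with hx | hx
  · exact ⟨x, Metric.mem_ball_self hr, Or.inr hx⟩
  have he := Real.exp_pos 1
  obtain ⟨n, hn⟩ := exists_nat_gt ((1 + Real.exp 1) / r)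
  have hn0 : (0 : ℝ) < n := lt_trans (by positivity) hn
  have hn0' : 0 < n := by exact_mod_cast hn0
  refine ⟨(((⌊(n : ℝ) * x⌋₊ + 1 : ℕ) : ℝ) + Real.exp 1) / n, ?_, Or.inl ?_⟩
  · rw [div_lt_iff₀ hr] at hn
    have f1 := Nat.floor_le (by positivity : 0 ≤ (n : ℝ) * x)
    have f2 := Nat.lt_floor_add_one ((n : ℝ) * x)
    rw [Metric.mem_ball, Real.dist_eq, abs_lt]
    push_cast
    constructor
    · rw [lt_sub_iff_add_lt, lt_div_iff₀ hn0]
      nlinarith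
    · rw [sub_lt_iff_lt_add, div_lt_iff₀ hn0]
      nlinarith
  · rw [mem_interior_iff_mem_nhds]
    filter_upwards [aux_nhds l (⌊(n : ℝ) * x⌋₊ + 1) n hn0'] with ν h
    exact ⟨_, n, Nat.succ_pos _, hn0', h⟩


/-- Given an increasing sequence `(L_k)` of positive integers tending to infinity, there exist
`ν ∈ (0,1/2)` and sequences `(p_k)`, `(q_k)` of positive integers such that `e, 1, ν` are
linearly independent over `ℚ` and `|q_k ν − p_k − e| ≤ Δ(p_k,q_k)^{(p_k+q_k)L_k}`, where
`Δ(p_k,q_k)` is the minimum of `1/2` and of all `|qν − p − re|` over integer triples `(p,q,r)`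
with `0 < |r|+|q| < 3(q_k+1)` and `(p,q,r) ∉ {0, ±(p_k,q_k,1), ±2(p_k,q_k,1)}`. -/
theorem stmt_0 (L : ℕ → ℕ) (hLpos : ∀ k, 0 < L k) (hLmono : Monotone L)
    (hLtop : Filter.Tendsto L Filter.atTop Filter.atTop) :
    ∃ (ν : ℝ) (p q : ℕ → ℕ), 0 < ν ∧ ν < 1 / 2 ∧
      (∀ a b c : ℤ, (a : ℝ) * Real.exp 1 + (b : ℝ) + (c : ℝ) * ν = 0 →
        a = 0 ∧ b = 0 ∧ c = 0) ∧
      ∀ k : ℕ, 1 ≤ k → 0 < p k ∧ 0 < q k ∧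
        |(q k : ℝ) * ν - (p k : ℝ) - Real.exp 1| ≤
          (sInf (insert (1 / 2 : ℝ)
            {x : ℝ | ∃ P Q R : ℤ, 0 < |R| + |Q| ∧ |R| + |Q| < 3 * ((q k : ℤ) + 1) ∧
              (P, Q, R) ≠ (0, 0, 0) ∧
              (P, Q, R) ≠ ((p k : ℤ), (q k : ℤ), 1) ∧
              (P, Q, R) ≠ (-(p k : ℤ), -(q k : ℤ), -1) ∧
              (P, Q, R) ≠ (2 * (p k : ℤ), 2 * (q k : ℤ), 2) ∧
              (P, Q, R) ≠ (-(2 * (p k : ℤ)), -(2 * (q k : ℤ)), -2) ∧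
              x = |(Q : ℝ) * ν - (P : ℝ) - (R : ℝ) * Real.exp 1|})) ^ ((p k + q k) * L k) := by
  let f : ℕ ⊕ (ℤ × ℤ × ℤ) → Set ℝ := fun i => match i with
    | Sum.inl k => interior {ν | ∃ p q : ℕ, 0 < p ∧ 0 < q ∧ AuxGood (L k) ν p q} ∪ Set.Iio (0 : ℝ)
    | Sum.inr t => {-((t.1 : ℝ) * Real.exp 1 + t.2.1) / t.2.2}ᶜ
  have hopen : ∀ i, IsOpen (f i) := by
    rintro (k | t)
    · exact isOpen_interior.union isOpen_Iio
    · exact isOpen_compl_singleton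
  have hdense : ∀ i, Dense (f i) := by
    rintro (k | t)
    · exact aux_dense (L k)
    · exact dense_compl_singleton _
  obtain ⟨ν, ⟨hν0, hν1⟩, hν⟩ := (dense_iInter_of_isOpen hopen hdense).inter_open_nonempty
    (Set.Ioo (0 : ℝ) (1 / 2)) isOpen_Ioo ⟨1 / 4, by norm_num, by norm_num⟩
  rw [Set.mem_iInter] at hν
  have hk : ∀ k, ∃ p q : ℕ, 0 < p ∧ 0 < q ∧ AuxGood (L k) ν p q := by
    intro k
    rcases hν (Sum.inl k) with h | h
    · have h2 := interior_subset (s := {ν | ∃ p q : ℕ, 0 < p ∧ 0 < q ∧ AuxGood (L k) ν p q}) h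
      exact h2
    · exact absurd h (not_lt.2 hν0.le)
  choose p q hp hq hg using hk
  refine ⟨ν, p, q, hν0, hν1, ?_, fun k _ => ⟨hp k, hq k, hg k⟩⟩
  intro a b c h
  have hc : c = 0 := by
    by_contra hc
    have hc' : (c : ℝ) ≠ 0 := by exact_mod_cast hc
    apply hν (Sum.inr (a, b, c))
    show ν = -((a : ℝ) * Real.exp 1 + b) / c
    rw [eq_div_iff hc']
    linarith
  subst hc
  have := aux_exp_indep a b (by simpa using h)
  exact ⟨this.1, this.2, rfl⟩
end

section
/- For every pair of integers p and q with q ≥ 1, one has |p + q·e| ≥ (1/(q−1)!)·min{3 − e, 1/(q+1)}. -/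
lemma aux_int (q : ℕ) : ∃ S : ℤ, (Nat.factorial q : ℝ) *
    ∑ m ∈ Finset.range (q + 1), (1 : ℝ) ^ m / (Nat.factorial m : ℝ) = S := by
  induction q with
  | zero => exact ⟨1, by simp⟩
  | succ n ih =>
    obtain ⟨S, hS⟩ := ih
    refine ⟨(n + 1) * S + 1, ?_⟩
    have h := Nat.cast_ne_zero (R := ℝ).2 (Nat.factorial_ne_zero (n + 1))
    rw [Finset.sum_range_succ, mul_add, one_pow, mul_one_div_cancel h, Nat.factorial_succ]
    push_cast
    rw [mul_assoc, hS]

lemma aux_r (q : ℕ) (hq : 1 ≤ q) : ∃ S : ℤ,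
    1 / ((q : ℝ) + 1) ≤ (Nat.factorial q : ℝ) * Real.exp 1 - S ∧
    (Nat.factorial q : ℝ) * Real.exp 1 - S ≤ Real.exp 1 - 2 := by
  obtain ⟨S, hS⟩ := aux_int q
  have hf : (0 : ℝ) < Nat.factorial q := by exact_mod_cast Nat.factorial_pos q
  have hq0 : (0 : ℝ) < (q : ℝ) + 1 := by positivity
  refine ⟨S, ?_, ?_⟩
  · have h := Real.sum_le_exp_of_nonneg (zero_le_one' ℝ) (q + 2)
    rw [Finset.sum_range_succ] at h
    have h2 := mul_le_mul_of_nonneg_left h hf.le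
    rw [mul_add, hS, one_pow, Nat.factorial_succ] at h2
    have : (Nat.factorial q : ℝ) * (1 / (((q + 1) * Nat.factorial q : ℕ) : ℝ)) = 1 / ((q : ℝ) + 1) := by
      push_cast; field_simp
    linarith
  · rcases Nat.lt_or_ge 1 q with h1 | h1
    · have h := Real.exp_bound' (zero_le_one' ℝ) le_rfl (Nat.succ_pos q)
      have h2 := mul_le_mul_of_nonneg_left h hf.le
      rw [Nat.succ_eq_add_one, mul_add, hS, one_pow, Nat.factorial_succ] at h2
      have e1 : (Nat.factorial q : ℝ) * (1 * (((q + 1 : ℕ) : ℝ) + 1) / ((((q + 1) * Nat.factorial q : ℕ) : ℝ) * ((q + 1 : ℕ) : ℝ)))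
          = ((q : ℝ) + 2) / ((q : ℝ) + 1) ^ 2 := by
        push_cast; field_simp; ring
      have e2 : ((q : ℝ) + 2) / ((q : ℝ) + 1) ^ 2 ≤ 1 / 2 := by
        have : (2 : ℝ) ≤ q := by exact_mod_cast h1
        rw [div_le_div_iff₀ (by positivity) (by norm_num)]
        nlinarith
      have := Real.exp_one_gt_d9
      linarith
    · obtain rfl : q = 1 := by omega
      norm_num [Finset.sum_range_succ] at hS ⊢
      linarith

/-- For every pair of integers `p` and `q` with `q ≥ 1`, one has
`|p + q·e| ≥ (1/(q−1)!)·min (3 − e) (1/(q+1))`. -/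
theorem stmt_1 (p : ℤ) (q : ℕ) (hq : 1 ≤ q) :
    (1 / (Nat.factorial (q - 1) : ℝ)) * min (3 - Real.exp 1) (1 / ((q : ℝ) + 1)) ≤
      |(p : ℝ) + (q : ℝ) * Real.exp 1| := by
  obtain ⟨S, hl, hu⟩ := aux_r q hq
  obtain ⟨n, rfl⟩ : ∃ n, q = n + 1 := ⟨q - 1, by omega⟩
  have hf : (0 : ℝ) < Nat.factorial n := by exact_mod_cast Nat.factorial_pos n
  rw [Nat.add_sub_cancel, one_div_mul_eq_div, div_le_iff₀ hf]
  rw [← abs_of_pos hf, ← abs_mul]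
  have key : ((p : ℝ) + ((n + 1 : ℕ) : ℝ) * Real.exp 1) * (Nat.factorial n : ℝ)
      = ((p * (Nat.factorial n : ℤ) + S : ℤ) : ℝ)
        + ((Nat.factorial (n + 1) : ℝ) * Real.exp 1 - S) := by
    rw [Nat.factorial_succ]; push_cast; ring
  rw [key]
  generalize (p * (Nat.factorial n : ℤ) + S : ℤ) = z
  rcases le_or_gt 0 z with hz | hz
  · have : (0 : ℝ) ≤ z := by exact_mod_cast hz
    exact (min_le_right _ _).trans (le_trans (by linarith) (le_abs_self _))
  · have : (z : ℝ) ≤ -1 := by exact_mod_cast (by omega : z ≤ -1)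
    exact (min_le_left _ _).trans (le_trans (by linarith) (neg_le_abs _))
end

section
/- Let (L_k)_{k≥1} be an increasing sequence of positive integers tending to infinity. Then there exist a real number ν ∈ (0,1/2), sequences (p_k)_{k≥1}, (q_k)_{k≥1} of positive integers, and a constant C > 0 independent of k, such that, setting (μ₁,μ₂,μ₃) := (e^{−1}, e^{ν}, e^{e}) and P_k := (p_k, q_k, 0) ∈ ℕ³: (a) for every nonzero R = (r₁,r₂,r₃) ∈ ℤ³ one has μ^R := μ₁^{r₁}·μ₂^{r₂}·μ₃^{r₃} ≠ 1; and (b) for every k, |μ^{P_k} − μ₃| ≤ (C·Δ*(P_k))^{|P_k|·L_k}, where |R| := |r₁|+|r₂|+|r₃| and Δ*(P_k) is the minimum of |μ^R − μ_j| over all j ∈ {1,2,3} and all R ∈ ℤ³ with |R| ≤ 2(p_k+q_k)+1 and R − e_j ∉ {(0,0,0), (p_k,q_k,−1), −(p_k,q_k,−1), 2(p_k,q_k,−1), −2(p_k,q_k,−1)}, e_j denoting the j-th standard basis vector of ℤ³. -/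
lemma aux_exp_int (n : ℤ) (x : ℝ) : Real.exp (n * x) = Real.exp x ^ n := by
  rw [mul_comm, Real.exp_mul, Real.rpow_intCast]

open Filter Topology in
/-- Linear independence of `1, e` over the integers. -/
lemma aux_e_irr (a b : ℤ) (h : (a : ℝ) + b * Real.exp 1 = 0) : b = 0 := by
  by_contra hb
  obtain ⟨n, hn, hdvd⟩ : ∃ n : ℕ, 0 < n ∧ b ∣ (n : ℤ) :=
    ⟨b.natAbs, Int.natAbs_pos.mpr hb, Int.dvd_natAbs_self⟩
  have hdf : b ∣ (n.factorial : ℤ) :=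
    hdvd.trans (Int.natCast_dvd_natCast.mpr (Nat.dvd_factorial hn le_rfl))
  obtain ⟨c, hc⟩ := hdf
  have hcR : (n.factorial : ℝ) = b * c := by exact_mod_cast hc
  -- n! e is an integer
  have h1 : (n.factorial : ℝ) * Real.exp 1 = ((-(a * c) : ℤ) : ℝ) := by
    rw [hcR]; push_cast; linear_combination (c : ℝ) * h
  -- n! S is an integer
  have h2 : ∃ s : ℤ, (n.factorial : ℝ) *
      ∑ m ∈ Finset.range (n + 1), (1 : ℝ) ^ m / m.factorial = s := by
    refine ⟨∑ m ∈ Finset.range (n + 1), ((n.factorial / m.factorial : ℕ) : ℤ), ?_⟩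
    rw [Finset.mul_sum]
    rw [Int.cast_sum]
    refine Finset.sum_congr rfl fun m hm => ?_
    have hmn : m ≤ n := by simpa [Nat.lt_succ_iff] using hm
    rw [Int.cast_natCast, Nat.cast_div (Nat.factorial_dvd_factorial hmn) (by positivity)]
    simp [div_eq_mul_inv]
  obtain ⟨s, hs⟩ := h2
  have hup := Real.exp_bound' (x := 1) zero_le_one le_rfl (n := n + 1) (Nat.succ_pos n)
  have hlow := Real.sum_le_exp_of_nonneg (x := 1) zero_le_one (n + 2)
  rw [Finset.sum_range_succ] at hlow
  have hfpos : (0 : ℝ) < n.factorial := by positivity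
  have hlt : (s : ℝ) < ((-(a * c) : ℤ) : ℝ) := by
    rw [← hs, ← h1]
    apply mul_lt_mul_of_pos_left _ hfpos
    refine lt_of_lt_of_le ?_ hlow
    have : (0 : ℝ) < 1 ^ (n + 1) / (n + 1).factorial := by positivity
    linarith
  have hlt2 : ((-(a * c) : ℤ) : ℝ) < s + 1 := by
    rw [← hs, ← h1]
    have h3 := mul_le_mul_of_nonneg_left hup hfpos.le
    rw [mul_add] at h3
    refine lt_of_le_of_lt h3 ?_
    have : (n.factorial : ℝ) * (1 ^ (n + 1) * (((n + 1 : ℕ) : ℝ) + 1) /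
        ((n + 1).factorial * ((n + 1 : ℕ) : ℝ))) < 1 := by
      rw [Nat.factorial_succ]
      push_cast
      have hn' : (1 : ℝ) ≤ n := by exact_mod_cast hn
      rw [one_pow, one_mul, mul_div_assoc', div_lt_one (by positivity)]
      have : (n : ℝ) + 1 + 1 < (n + 1) * (n + 1) := by nlinarith
      nlinarith
    linarith
  have h4 : s < -(a * c) := by exact_mod_cast hlt
  have h5 : -(a * c) < s + 1 := by exact_mod_cast hlt2
  omega

/-- The monomial as an exponential. -/
lemma aux_prod (ν : ℝ) (R : Fin 3 → ℤ) :
    (∏ i, (![Real.exp (-1), Real.exp ν, Real.exp (Real.exp 1)]) i ^ R i) =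
      Real.exp (-(R 0 : ℝ) + R 1 * ν + R 2 * Real.exp 1) := by
  rw [Fin.prod_univ_three]
  simp only [Matrix.cons_val_zero, Matrix.cons_val_one, Matrix.cons_val]
  rw [← aux_exp_int, ← aux_exp_int, ← aux_exp_int, ← Real.exp_add, ← Real.exp_add]
  congr 1
  ring

lemma aux_single (ν : ℝ) (j : Fin 3) :
    (![Real.exp (-1), Real.exp ν, Real.exp (Real.exp 1)]) j =
      Real.exp (-((Pi.single j 1 : Fin 3 → ℤ) 0 : ℝ) + ((Pi.single j 1 : Fin 3 → ℤ) 1 : ℝ) * ν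
        + ((Pi.single j 1 : Fin 3 → ℤ) 2 : ℝ) * Real.exp 1) := by
  fin_cases j <;> simp [Pi.single_apply]

/-- At `ν = (p+e)/q` the only vanishing combinations are multiples of `(p,q,-1)`. -/
lemma aux_res (p q : ℕ) (hq : 0 < q) (S : Fin 3 → ℤ)
    (h : -(S 0 : ℝ) + S 1 * ((p + Real.exp 1) / q) + S 2 * Real.exp 1 = 0) :
    S 1 = -S 2 * q ∧ S 0 = -S 2 * p := by
  have hq' : (q : ℝ) ≠ 0 := by positivity
  have h1 : ((-(S 0) * q + S 1 * p : ℤ) : ℝ) + ((S 1 + S 2 * q : ℤ) : ℝ) * Real.exp 1 = 0 := by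
    field_simp at h
    push_cast
    linear_combination h
  have h2 := aux_e_irr _ _ h1
  rw [h2] at h1
  have h3 : -(S 0) * q + S 1 * p = 0 := by
    have : ((-(S 0) * q + S 1 * p : ℤ) : ℝ) = 0 := by simpa using h1
    exact_mod_cast this
  have h4 : S 1 = -S 2 * q := by linarith
  refine ⟨h4, ?_⟩
  rw [h4] at h3
  have hqz : (q : ℤ) ≠ 0 := by exact_mod_cast hq.ne'
  apply mul_right_cancel₀ hqz
  linarith

/-- The index condition. -/
def auxCond (p q : ℕ) (j : Fin 3) (R : Fin 3 → ℤ) : Prop :=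
  |R 0| + |R 1| + |R 2| ≤ 2 * ((p : ℤ) + (q : ℤ)) + 1 ∧
              R - Pi.single j 1 ≠ 0 ∧
              R - Pi.single j 1 ≠ ![(p : ℤ), (q : ℤ), -1] ∧
              R - Pi.single j 1 ≠ -![(p : ℤ), (q : ℤ), -1] ∧
              R - Pi.single j 1 ≠ (2 : ℤ) • ![(p : ℤ), (q : ℤ), -1] ∧
              R - Pi.single j 1 ≠ -((2 : ℤ) • ![(p : ℤ), (q : ℤ), -1])

/-- The distance function. -/
noncomputable def auxF (ν : ℝ) (j : Fin 3) (R : Fin 3 → ℤ) : ℝ :=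
  |(∏ i, (![Real.exp (-1), Real.exp ν, Real.exp (Real.exp 1)]) i ^ R i) -
                (![Real.exp (-1), Real.exp ν, Real.exp (Real.exp 1)]) j|

lemma auxF_cont (j : Fin 3) (R : Fin 3 → ℤ) : Continuous fun ν => auxF ν j R := by
  unfold auxF
  simp_rw [aux_prod, aux_single]
  fun_prop

lemma auxF_pos (p q : ℕ) (hq : 0 < q) (j : Fin 3) (R : Fin 3 → ℤ)
    (h : auxCond p q j R) : 0 < auxF ((p + Real.exp 1) / q) j R := by
  obtain ⟨hsz, h0, h1, h2, h3, h4⟩ := h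
  unfold auxF
  rw [abs_pos, sub_ne_zero, aux_prod, aux_single]
  intro heq
  have heq := Real.exp_injective heq
  set E : Fin 3 → ℤ := Pi.single j 1 with hE
  set S := R - E with hS
  have hS' : ∀ i, S i = R i - E i := fun i => rfl
  obtain ⟨e1, e0⟩ := aux_res p q hq S (by
    simp only [hS']; push_cast; linear_combination heq)
  have hEs : |E 0| + |E 1| + |E 2| ≤ 1 := by
    rw [hE]; fin_cases j <;> simp [Pi.single_apply]
  have hSs : |S 0| + |S 1| + |S 2| ≤ 2 * ((p : ℤ) + q + 1) := by
    have a0 := abs_sub (R 0) (E 0)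
    have a1 := abs_sub (R 1) (E 1)
    have a2 := abs_sub (R 2) (E 2)
    simp only [hS']
    linarith
  have hs2 : |S 2| ≤ 2 := by
    have hpq : (0 : ℤ) < (p : ℤ) + q + 1 := by positivity
    have : |S 2| * ((p : ℤ) + q + 1) ≤ 2 * ((p : ℤ) + q + 1) := by
      refine le_trans (le_of_eq ?_) hSs
      rw [e1, e0, abs_mul, abs_mul, abs_neg, Nat.abs_cast, Nat.abs_cast]
      ring
    exact le_of_mul_le_mul_right this hpq
  obtain ⟨l, u⟩ := abs_le.mp hs2
  have hform : S = ![-S 2 * p, -S 2 * q, S 2] := by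
    ext i; fin_cases i <;> simp [e0, e1]
  have hcase : S 2 = -2 ∨ S 2 = -1 ∨ S 2 = 0 ∨ S 2 = 1 ∨ S 2 = 2 := by omega
  rcases hcase with h | h | h | h | h <;> rw [h] at hform
  · exact h3 (by rw [hform]; ext i; fin_cases i <;> simp)
  · exact h1 (by rw [hform]; ext i; fin_cases i <;> simp)
  · exact h0 (by rw [hform]; ext i; fin_cases i <;> simp)
  · exact h2 (by rw [hform]; ext i; fin_cases i <;> simp)
  · exact h4 (by rw [hform]; ext i; fin_cases i <;> simp)

lemma aux_fin (p q : ℕ) : {x : Fin 3 × (Fin 3 → ℤ) | auxCond p q x.1 x.2}.Finite := by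
  set M : ℤ := 2 * ((p : ℤ) + (q : ℤ)) + 1
  have hfin : (Set.univ ×ˢ Set.Icc (fun _ => -M) (fun _ => M) :
      Set (Fin 3 × (Fin 3 → ℤ))).Finite := Set.finite_univ.prod (Set.finite_Icc _ _)
  refine hfin.subset ?_
  rintro ⟨j, R⟩ ⟨h, -⟩
  simp only at h
  have n0 := abs_nonneg (R 0)
  have n1 := abs_nonneg (R 1)
  have n2 := abs_nonneg (R 2)
  have b : ∀ i, |R i| ≤ M := by
    intro i; fin_cases i <;> simp only [M, Fin.zero_eta, Fin.mk_one, Fin.reduceFinMk] <;> linarith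
  exact ⟨trivial, fun i => (abs_le.mp (b i)).1, fun i => (abs_le.mp (b i)).2⟩

open Filter Topology in
lemma aux_unif {ι : Type*} {T : Set ι} (hT : T.Finite) (F : ι → ℝ → ℝ) (x : ℝ)
    (hc : ∀ i, Continuous (F i)) (hp : ∀ i ∈ T, 0 < F i x) :
    ∃ c > 0, ∀ᶠ ν in 𝓝 x, ∀ i ∈ T, c ≤ F i ν := by
  induction T, hT using Set.Finite.induction_on with
  | empty => exact ⟨1, one_pos, by simp⟩
  | @insert a s _ _ ih =>
    obtain ⟨c, c0, hcs⟩ := ih fun i hi => hp i (Set.mem_insert_of_mem _ hi)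
    have ha := hp a (Set.mem_insert _ _)
    refine ⟨min c (F a x / 2), lt_min c0 (by linarith), ?_⟩
    have h2 : ∀ᶠ ν in 𝓝 x, F a x / 2 < F a ν :=
      (hc a).continuousAt.eventually_const_lt (by linarith)
    filter_upwards [hcs, h2] with ν h1 h2 i hi
    rcases hi with rfl | hi
    · exact (min_le_right _ _).trans h2.le
    · exact (min_le_left _ _).trans (h1 i hi)

/-- The property (b) for one `k`. -/
def auxGood (p q N : ℕ) (ν : ℝ) : Prop :=
  |Real.exp (-1) ^ (p : ℤ) * Real.exp ν ^ (q : ℤ) - Real.exp (Real.exp 1)| ≤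
    (1 * sInf {x : ℝ | ∃ (j : Fin 3) (R : Fin 3 → ℤ),
              |R 0| + |R 1| + |R 2| ≤ 2 * ((p : ℤ) + (q : ℤ)) + 1 ∧
              R - Pi.single j 1 ≠ 0 ∧
              R - Pi.single j 1 ≠ ![(p : ℤ), (q : ℤ), -1] ∧
              R - Pi.single j 1 ≠ -![(p : ℤ), (q : ℤ), -1] ∧
              R - Pi.single j 1 ≠ (2 : ℤ) • ![(p : ℤ), (q : ℤ), -1] ∧
              R - Pi.single j 1 ≠ -((2 : ℤ) • ![(p : ℤ), (q : ℤ), -1]) ∧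
              x = |(∏ i, (![Real.exp (-1), Real.exp ν, Real.exp (Real.exp 1)]) i ^ R i) -
                (![Real.exp (-1), Real.exp ν, Real.exp (Real.exp 1)]) j|}) ^ N

open Filter Topology in
lemma auxGood_ev (p q N : ℕ) (hq : 0 < q) :
    ∀ᶠ ν in 𝓝 (((p : ℝ) + Real.exp 1) / q), auxGood p q N ν := by
  obtain ⟨c, c0, hc⟩ := aux_unif (aux_fin p q) (fun x ν => auxF ν x.1 x.2)
    (((p : ℝ) + Real.exp 1) / q) (fun x => auxF_cont x.1 x.2)
    (fun x hx => auxF_pos p q hq x.1 x.2 hx)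
  have hcont : Continuous fun ν : ℝ =>
      |Real.exp (-1) ^ (p : ℤ) * Real.exp ν ^ (q : ℤ) - Real.exp (Real.exp 1)| := by
    simp only [zpow_natCast]; fun_prop
  have hzero : |Real.exp (-1) ^ (p : ℤ) * Real.exp (((p : ℝ) + Real.exp 1) / q) ^ (q : ℤ)
      - Real.exp (Real.exp 1)| = 0 := by
    rw [abs_eq_zero, sub_eq_zero, ← aux_exp_int, ← aux_exp_int, ← Real.exp_add]
    congr 1
    have hq' : (q : ℝ) ≠ 0 := by positivity
    push_cast
    field_simp
    ring
  have h2 := hcont.continuousAt.eventually_lt_const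
    (show |Real.exp (-1) ^ (p : ℤ) * Real.exp (((p : ℝ) + Real.exp 1) / q) ^ (q : ℤ)
      - Real.exp (Real.exp 1)| < c ^ N by rw [hzero]; positivity)
  filter_upwards [hc, h2] with ν h1 h2
  unfold auxGood
  refine h2.le.trans ?_
  rw [one_mul]
  refine pow_le_pow_left₀ c0.le (le_csInf ?_ ?_) N
  · have hq' : (q : ℤ) ≠ 0 := by exact_mod_cast hq.ne'
    refine ⟨_, 0, 0, ?_, ?_, ?_, ?_, ?_, ?_, rfl⟩
    · simp; positivity
    · intro h; simpa using congrFun h 0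
    all_goals
      intro h
      have := congrFun h 2
      simp at this
  · rintro x ⟨j, R, a1, a2, a3, a4, a5, a6, rfl⟩
    exact h1 (j, R) ⟨a1, a2, a3, a4, a5, a6⟩

lemma aux_approx (x ε : ℝ) (hx : 0 < x) (hε : 0 < ε) :
    ∃ p q : ℕ, 0 < p ∧ 0 < q ∧ |((p : ℝ) + Real.exp 1) / q - x| < ε := by
  obtain ⟨q, hq⟩ := exists_nat_gt (max (1 / ε) ((1 + Real.exp 1) / x))
  have e0 := Real.exp_pos 1
  have q1 : 1 / ε < q := (le_max_left _ _).trans_lt hq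
  have q2 : (1 + Real.exp 1) / x < q := (le_max_right _ _).trans_lt hq
  have q0 : (0 : ℝ) < q := lt_trans (by positivity) q1
  rw [div_lt_iff₀ hε] at q1
  rw [div_lt_iff₀ hx] at q2
  have hy : 1 ≤ q * x - Real.exp 1 := by linarith
  have f1 := Nat.floor_le (show 0 ≤ q * x - Real.exp 1 by linarith)
  have f2 := Nat.lt_floor_add_one (q * x - Real.exp 1)
  refine ⟨⌊q * x - Real.exp 1⌋₊, q, Nat.floor_pos.mpr hy, by exact_mod_cast q0, ?_⟩
  rw [abs_lt]
  constructor
  · rw [neg_lt_sub_iff_lt_add, ← sub_lt_iff_lt_add', lt_div_iff₀ q0]; nlinarith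
  · rw [sub_lt_iff_lt_add, div_lt_iff₀ q0]; nlinarith

open Filter Topology in
lemma aux_main (L : ℕ → ℕ) : ∃ ν : ℝ, 0 < ν ∧ ν < 1 / 2 ∧
    (∀ R : Fin 3 → ℤ, ν ≠ (R 0 - R 2 * Real.exp 1) / R 1) ∧
    ∀ k, ∃ p q : ℕ, 0 < p ∧ 0 < q ∧ auxGood p q ((p + q) * L k) ν := by
  let A : ℕ → Set ℝ := fun k => Set.Iio 0 ∪ interior
    {ν | ∃ p q : ℕ, 0 < p ∧ 0 < q ∧ auxGood p q ((p + q) * L k) ν}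
  let f : ℕ ⊕ (Fin 3 → ℤ) → Set ℝ :=
    Sum.elim A (fun R => {((R 0 : ℝ) - R 2 * Real.exp 1) / R 1}ᶜ)
  have hd : Dense (⋂ i, f i) := by
    apply dense_iInter_of_isOpen
    · rintro (k | R)
      · exact isOpen_Iio.union isOpen_interior
      · exact isOpen_compl_singleton
    · rintro (k | R)
      · rw [Metric.dense_iff]
        intro x ε hε
        rcases le_or_gt x 0 with hx | hx
        · refine ⟨x - ε / 2, ?_, Or.inl ?_⟩
          · rw [Metric.mem_ball, Real.dist_eq, abs_lt]; constructor <;> linarith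
          · simp only [Set.mem_Iio]; linarith
        · obtain ⟨p, q, hp, hq, h⟩ := aux_approx x ε hx hε
          refine ⟨_, by rwa [Metric.mem_ball, Real.dist_eq], Or.inr ?_⟩
          rw [mem_interior_iff_mem_nhds]
          filter_upwards [auxGood_ev p q ((p + q) * L k) hq] with ν hν
          exact ⟨p, q, hp, hq, hν⟩
      · exact dense_compl_singleton _
  obtain ⟨ν, hν, hν2⟩ := hd.exists_mem_open (isOpen_Ioo (a := (0 : ℝ)) (b := 1 / 2))
    ⟨1 / 4, by norm_num, by norm_num⟩
  rw [Set.mem_iInter] at hν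
  refine ⟨ν, hν2.1, hν2.2, fun R => hν (Sum.inr R), fun k => ?_⟩
  rcases hν (Sum.inl k) with h | h
  · exact absurd h (not_lt.mpr hν2.1.le)
  · have hmem := interior_subset h
    exact hmem


/-- Given an increasing sequence `(L_k)` of positive integers tending to infinity, there exist
`ν ∈ (0,1/2)`, sequences of positive integers `(p_k)`, `(q_k)` and a constant `C > 0` such that,
with `μ = (e^{−1}, e^ν, e^e)` and `P_k = (p_k,q_k,0)`: (a) `μ^R ≠ 1` for every nonzero `R ∈ ℤ³`;
(b) `|μ^{P_k} − μ₃| ≤ (C·Δ*(P_k))^{|P_k|·L_k}` where `Δ*(P_k)` is the minimum of `|μ^R − μ_j|`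
over `j ∈ {1,2,3}` and `R ∈ ℤ³` with `|R| ≤ 2(p_k+q_k)+1` and
`R − e_j ∉ {0, ±(p_k,q_k,−1), ±2(p_k,q_k,−1)}`. -/
theorem stmt_2 (L : ℕ → ℕ) (hLpos : ∀ k, 0 < L k) (hLmono : Monotone L)
    (hLtop : Filter.Tendsto L Filter.atTop Filter.atTop) :
    ∃ (ν : ℝ) (p q : ℕ → ℕ) (C : ℝ), 0 < ν ∧ ν < 1 / 2 ∧ (∀ k, 0 < p k ∧ 0 < q k) ∧ 0 < C ∧
      (∀ R : Fin 3 → ℤ, R ≠ 0 →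
        (∏ i, (![Real.exp (-1), Real.exp ν, Real.exp (Real.exp 1)]) i ^ R i) ≠ 1) ∧
      ∀ k : ℕ,
        |Real.exp (-1) ^ (p k : ℤ) * Real.exp ν ^ (q k : ℤ) - Real.exp (Real.exp 1)| ≤
          (C * sInf {x : ℝ | ∃ (j : Fin 3) (R : Fin 3 → ℤ),
              |R 0| + |R 1| + |R 2| ≤ 2 * ((p k : ℤ) + (q k : ℤ)) + 1 ∧
              R - Pi.single j 1 ≠ 0 ∧
              R - Pi.single j 1 ≠ ![(p k : ℤ), (q k : ℤ), -1] ∧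
              R - Pi.single j 1 ≠ -![(p k : ℤ), (q k : ℤ), -1] ∧
              R - Pi.single j 1 ≠ (2 : ℤ) • ![(p k : ℤ), (q k : ℤ), -1] ∧
              R - Pi.single j 1 ≠ -((2 : ℤ) • ![(p k : ℤ), (q k : ℤ), -1]) ∧
              x = |(∏ i, (![Real.exp (-1), Real.exp ν, Real.exp (Real.exp 1)]) i ^ R i) -
                (![Real.exp (-1), Real.exp ν, Real.exp (Real.exp 1)]) j|}) ^
            ((p k + q k) * L k) := by
  obtain ⟨ν, h0, h1, hR, hk⟩ := aux_main L
  choose p q hp hq hg using hk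
  refine ⟨ν, p, q, 1, h0, h1, fun k => ⟨hp k, hq k⟩, one_pos, ?_, fun k => hg k⟩
  intro R hR0 h
  rw [aux_prod, Real.exp_eq_one_iff] at h
  by_cases h1 : R 1 = 0
  · rw [h1] at h
    have h' : ((-(R 0) : ℤ) : ℝ) + R 2 * Real.exp 1 = 0 := by
      push_cast; push_cast at h; linear_combination h
    have h2 := aux_e_irr _ _ h'
    rw [h2] at h'
    have h3 : R 0 = 0 := by simpa using h'
    apply hR0
    ext i
    fin_cases i <;> simp [h1, h2, h3]
  · apply hR R
    have : (R 1 : ℝ) ≠ 0 := by exact_mod_cast h1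
    rw [eq_div_iff this]
    linear_combination h
end

section
/- Let p ≥ 1 and let T₁, T₂ be ℂ-linear involutions of ℂ^{2p} such that dim_ℂ ker(T₁ − id) = p, dim_ℂ ker(T₂ − id) = p, and ker(T₁ − id) ∩ ker(T₂ − id) = {0}. If S := T₁ ∘ T₂ has 2p distinct eigenvalues, then neither 1 nor −1 is an eigenvalue of S. -/
theorem aux_det_involution {V : Type*} [AddCommGroup V] [Module ℂ V] [FiniteDimensional ℂ V]
    (p : ℕ) (hV : Module.finrank ℂ V = 2 * p) (T : V →ₗ[ℂ] V) (hT : T ∘ₗ T = LinearMap.id)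
    (hfix : Module.finrank ℂ (LinearMap.ker (T - LinearMap.id)) = p) :
    LinearMap.det T = (-1) ^ p := by
  have hTT : ∀ v, T (T v) = v := fun v => LinearMap.congr_fun hT v
  have hmem : ∀ v, v ∈ LinearMap.ker (T - LinearMap.id) ↔ T v = v := by
    intro v
    simp [LinearMap.mem_ker, sub_eq_zero]
  have hinv : LinearMap.ker (T - LinearMap.id) ≤ (LinearMap.ker (T - LinearMap.id)).comap T := by
    intro v hv
    rw [Submodule.mem_comap, (hmem v).1 hv]
    exact hv
  rw [LinearMap.det_eq_det_mul_det _ T hinv]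
  have h1 : T.restrict hinv = LinearMap.id := by
    ext v
    simpa using (hmem v).1 v.2
  have h2 : Submodule.mapQ _ _ T hinv = (-1 : ℂ) • LinearMap.id := by
    apply Submodule.linearMap_qext
    ext v
    simp only [LinearMap.comp_apply, Submodule.mkQ_apply, Submodule.mapQ_apply,
      LinearMap.smul_apply, LinearMap.id_apply]
    rw [← Submodule.Quotient.mk_smul, Submodule.Quotient.eq, hmem]
    simp [hTT, add_comm]
  have h3 := Submodule.finrank_quotient_add_finrank (LinearMap.ker (T - LinearMap.id))
  have h4 : Module.finrank ℂ (V ⧸ LinearMap.ker (T - LinearMap.id)) = p := by omega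
  rw [h1, h2, LinearMap.det_id, LinearMap.det_smul, LinearMap.det_id, h4]
  simp

/-- If `T₁, T₂` are ℂ-linear involutions of `ℂ^{2p}` whose fixed-point spaces have dimension `p`
and intersect trivially, and `S = T₁ ∘ T₂` has `2p` distinct eigenvalues, then neither `1`
nor `−1` is an eigenvalue of `S`. -/
theorem stmt_3 (p : ℕ) (hp : 1 ≤ p)
    (T₁ T₂ : (Fin (2 * p) → ℂ) →ₗ[ℂ] (Fin (2 * p) → ℂ))
    (hT₁ : T₁ ∘ₗ T₁ = LinearMap.id) (hT₂ : T₂ ∘ₗ T₂ = LinearMap.id)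
    (hfix₁ : Module.finrank ℂ (LinearMap.ker (T₁ - LinearMap.id)) = p)
    (hfix₂ : Module.finrank ℂ (LinearMap.ker (T₂ - LinearMap.id)) = p)
    (hfix : LinearMap.ker (T₁ - LinearMap.id) ⊓ LinearMap.ker (T₂ - LinearMap.id) = ⊥)
    (μ : Fin (2 * p) → ℂ) (hμinj : Function.Injective μ)
    (hμ : ∀ i, Module.End.HasEigenvalue
      (T₁ ∘ₗ T₂ : Module.End ℂ (Fin (2 * p) → ℂ)) (μ i)) :
    ¬ Module.End.HasEigenvalue (T₁ ∘ₗ T₂ : Module.End ℂ (Fin (2 * p) → ℂ)) 1 ∧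
      ¬ Module.End.HasEigenvalue (T₁ ∘ₗ T₂ : Module.End ℂ (Fin (2 * p) → ℂ)) (-1) := by
  classical
  have e1 : ∀ v, T₁ (T₁ v) = v := fun v => LinearMap.congr_fun hT₁ v
  have e2 : ∀ v, T₂ (T₂ v) = v := fun v => LinearMap.congr_fun hT₂ v
  set S : Module.End ℂ (Fin (2 * p) → ℂ) := T₁ ∘ₗ T₂ with hS
  have hdet : LinearMap.det S = 1 := by
    rw [hS, LinearMap.det_comp, aux_det_involution p (by simp) T₁ hT₁ hfix₁,
      aux_det_involution p (by simp) T₂ hT₂ hfix₂, ← mul_pow]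
    simp
  set s : Finset ℂ := Finset.univ.image μ with hs
  have hcard : s.card = 2 * p := by
    rw [hs, Finset.card_image_of_injective _ hμinj]; simp
  have hmon := LinearMap.charpoly_monic S
  have hle : s.val ≤ S.charpoly.roots := by
    rw [Multiset.le_iff_subset s.nodup]
    intro x hx
    rw [Finset.mem_val] at hx
    obtain ⟨i, -, rfl⟩ := Finset.mem_image.1 hx
    rw [Polynomial.mem_roots hmon.ne_zero]
    exact (Module.End.hasEigenvalue_iff_isRoot_charpoly S (μ i)).1 (hμ i)
  have hroots : s.val = S.charpoly.roots := by
    apply Multiset.eq_of_le_of_card_le hle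
    refine (Polynomial.card_roots' _).trans ?_
    rw [LinearMap.charpoly_natDegree]
    simp [hcard]
  have hmem : ∀ x, x ∈ s ↔ S.HasEigenvalue x := by
    intro x
    rw [← Finset.mem_val, hroots, Polynomial.mem_roots hmon.ne_zero,
      Module.End.hasEigenvalue_iff_isRoot_charpoly]
  have hprod : ∏ x ∈ s, x = 1 := by
    rw [← hdet, Module.End.det_eq_prod_roots_charpoly_of_splits (IsAlgClosed.splits _), ← hroots]
    exact (Finset.prod_val s).symm
  have hne : ∀ x ∈ s, x ≠ 0 := by
    intro x hx h0
    exact one_ne_zero (hprod.symm.trans (Finset.prod_eq_zero hx h0))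
  have hinv : ∀ x ∈ s, x⁻¹ ∈ s := by
    intro x hx
    have hx0 := hne x hx
    rw [hmem] at hx ⊢
    obtain ⟨v, hv⟩ := hx.exists_hasEigenvector
    have hv1 : T₁ (T₂ v) = x • v := hv.apply_eq_smul
    have hv2 : T₂ v = x • T₁ v := by
      rw [← map_smul, ← hv1, e1]
    apply Module.End.hasEigenvalue_of_hasEigenvector (x := T₂ v)
    refine Module.End.hasEigenvector_iff.2 ⟨Module.End.mem_eigenspace_iff.2 ?_, ?_⟩
    · change T₁ (T₂ (T₂ v)) = _
      rw [e2, hv2, smul_smul, inv_mul_cancel₀ hx0, one_smul]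
    · intro h
      apply hv.2
      rw [← e2 v, h, map_zero]
  have hfixed : ∀ x : ℂ, x ≠ 0 → x⁻¹ = x → x = 1 ∨ x = -1 := by
    intro x hx h
    have : x * x = 1 := by
      nth_rewrite 1 [← h]
      exact inv_mul_cancel₀ hx
    exact mul_self_eq_one_iff.1 this
  have hm1 : (-1 : ℂ) ∉ s := by
    intro hm
    have h : ∏ x ∈ s.erase (-1), x = 1 := by
      refine Finset.prod_involution (fun x _ => x⁻¹) ?_ ?_ ?_ ?_
      · intro x hx
        exact mul_inv_cancel₀ (hne x (Finset.mem_of_mem_erase hx))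
      · intro x hx hx1 h
        rcases hfixed x (hne x (Finset.mem_of_mem_erase hx)) h with h | h
        · exact hx1 h
        · exact Finset.ne_of_mem_erase hx h
      · intro x hx
        refine Finset.mem_erase.2 ⟨fun h => Finset.ne_of_mem_erase hx ?_,
          hinv x (Finset.mem_of_mem_erase hx)⟩
        rw [← inv_inv x, h]; norm_num
      · intro x hx
        exact inv_inv x
    have h' := Finset.mul_prod_erase s (fun x => x) hm
    rw [h, hprod] at h'
    norm_num at h'
  refine ⟨fun h1 => ?_, fun h => hm1 ((hmem _).2 h)⟩
  have hm := (hmem _).2 h1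
  have h : ∏ x ∈ s.erase 1, (-1 : ℂ) = 1 := by
    refine Finset.prod_involution (fun x _ => x⁻¹) ?_ ?_ ?_ ?_
    · intro x hx
      norm_num
    · intro x hx _ h
      rcases hfixed x (hne x (Finset.mem_of_mem_erase hx)) h with h | h
      · exact Finset.ne_of_mem_erase hx h
      · exact hm1 (h ▸ Finset.mem_of_mem_erase hx)
    · intro x hx
      refine Finset.mem_erase.2 ⟨fun h => Finset.ne_of_mem_erase hx ?_,
        hinv x (Finset.mem_of_mem_erase hx)⟩
      rw [← inv_inv x, h]; norm_num
    · intro x hx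
      exact inv_inv x
  have h' := Finset.mul_prod_erase s (fun _ => (-1 : ℂ)) hm
  rw [h, Finset.prod_const, hcard, pow_mul] at h'
  norm_num at h'
end

section
/- Let T₁ be a ℂ-linear involution of ℂⁿ, ρ a conjugate-linear involution of ℂⁿ, T₂ := ρ∘T₁∘ρ, and S := T₁∘T₂. Then: (a) if u is an eigenvector of S with eigenvalue κ, then T₁u is an eigenvector of S with eigenvalue κ^{−1} and ρu is an eigenvector of S with eigenvalue (conj κ)^{−1}; in particular, the set of eigenvalues of S is invariant under κ ↦ κ^{−1} and under κ ↦ (conj κ)^{−1}. (b) If moreover S has n distinct eigenvalues, then every real eigenvalue of S is positive; in particular, −1 is not an eigenvalue of S. -/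
/-- Let `T₁` be a ℂ-linear involution of `ℂⁿ`, `ρ` a conjugate-linear involution,
`T₂ = ρ∘T₁∘ρ` and `S = T₁∘T₂`. (a) If `u` is an eigenvector of `S` with eigenvalue `κ`, then
`T₁u` is an eigenvector with eigenvalue `κ⁻¹` and `ρu` an eigenvector with eigenvalue
`(conj κ)⁻¹`; in particular the set of eigenvalues of `S` is invariant under `κ ↦ κ⁻¹` and
`κ ↦ (conj κ)⁻¹`. (b) If `S` has `n` distinct eigenvalues then every real eigenvalue of `S`
is positive; in particular `−1` is not an eigenvalue of `S`. -/
theorem stmt_5 (n : ℕ) (T₁ : (Fin n → ℂ) →ₗ[ℂ] (Fin n → ℂ))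
    (hT₁ : ∀ v, T₁ (T₁ v) = v)
    (ρ : (Fin n → ℂ) → (Fin n → ℂ))
    (hρadd : ∀ v w, ρ (v + w) = ρ v + ρ w)
    (hρsmul : ∀ (c : ℂ) v, ρ (c • v) = (starRingEnd ℂ) c • ρ v)
    (hρinv : ∀ v, ρ (ρ v) = v)
    (S : Module.End ℂ (Fin n → ℂ))
    (hS : ∀ v, S v = T₁ (ρ (T₁ (ρ v)))) :
    (∀ (κ : ℂ) (u : Fin n → ℂ), u ≠ 0 → S u = κ • u →
      (T₁ u ≠ 0 ∧ S (T₁ u) = κ⁻¹ • T₁ u) ∧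
      (ρ u ≠ 0 ∧ S (ρ u) = ((starRingEnd ℂ) κ)⁻¹ • ρ u)) ∧
    (∀ κ : ℂ, Module.End.HasEigenvalue S κ →
      Module.End.HasEigenvalue S κ⁻¹ ∧
      Module.End.HasEigenvalue S ((starRingEnd ℂ) κ)⁻¹) ∧
    ((∃ μ : Fin n → ℂ, Function.Injective μ ∧ ∀ i, Module.End.HasEigenvalue S (μ i)) →
      (∀ κ : ℝ, Module.End.HasEigenvalue S (κ : ℂ) → 0 < κ) ∧
      ¬ Module.End.HasEigenvalue S (-1)) := by
  have hρ0 : ρ 0 = 0 := by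
    have h := hρsmul 0 0
    simpa using h
  have hTne : ∀ u, u ≠ 0 → T₁ u ≠ 0 := by
    intro u hu h
    apply hu
    rw [← hT₁ u, h, map_zero]
  have hρne : ∀ u, u ≠ 0 → ρ u ≠ 0 := by
    intro u hu h
    apply hu
    rw [← hρinv u, h, hρ0]
  have hκne : ∀ (κ : ℂ) (u : Fin n → ℂ), u ≠ 0 → S u = κ • u → κ ≠ 0 := by
    rintro κ u hu h rfl
    rw [hS, zero_smul] at h
    exact hTne _ (hρne _ (hTne _ (hρne _ hu))) h
  have ha : ∀ (κ : ℂ) (u : Fin n → ℂ), u ≠ 0 → S u = κ • u →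
      (T₁ u ≠ 0 ∧ S (T₁ u) = κ⁻¹ • T₁ u) ∧
      (ρ u ≠ 0 ∧ S (ρ u) = ((starRingEnd ℂ) κ)⁻¹ • ρ u) := by
    intro κ u hu h
    have hκ := hκne κ u hu h
    have hκ' : (starRingEnd ℂ) κ ≠ 0 := by simpa using hκ
    refine ⟨⟨hTne u hu, ?_⟩, hρne u hu, ?_⟩
    · have h1 : S (T₁ (S u)) = T₁ u := by
        rw [hS u, hS, hT₁, hρinv, hT₁, hρinv]
      rw [h, map_smul, map_smul] at h1
      exact (eq_inv_smul_iff₀ hκ).mpr h1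
    · have h1 : S (ρ (S u)) = ρ u := by
        rw [hS u, hS, hρinv, hT₁, hρinv, hT₁]
      rw [h, hρsmul, map_smul] at h1
      exact (eq_inv_smul_iff₀ hκ').mpr h1
  refine ⟨ha, ?_, ?_⟩
  · intro κ hκ
    obtain ⟨u, hu⟩ := hκ.exists_hasEigenvector
    obtain ⟨⟨h1, h2⟩, h3, h4⟩ := ha κ u hu.2 hu.apply_eq_smul
    exact ⟨Module.End.hasEigenvalue_of_hasEigenvector
        (Module.End.hasEigenvector_iff.mpr ⟨Module.End.mem_eigenspace_iff.mpr h2, h1⟩),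
      Module.End.hasEigenvalue_of_hasEigenvector
        (Module.End.hasEigenvector_iff.mpr ⟨Module.End.mem_eigenspace_iff.mpr h4, h3⟩)⟩
  · rintro ⟨μ, hμ, hev⟩
    have hpos : ∀ κ : ℝ, Module.End.HasEigenvalue S (κ : ℂ) → 0 < κ := by
      intro κ hκ
      choose v hv using fun i => (hev i).exists_hasEigenvector
      have hli : LinearIndependent ℂ v :=
        Module.End.eigenvectors_linearIndependent' S μ hμ v hv
      let b := basisOfLinearIndependentOfCardEqFinrank' v hli (by simp)
      have hb : ∀ i, b i = v i := fun i => by simp [b]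
      have hrepr : ∀ j w, b.coord j (S w) = μ j * b.coord j w := by
        intro j w
        have : (b.coord j) ∘ₗ S = μ j • b.coord j := by
          apply b.ext
          intro i
          have h1 : S (b i) = μ i • b i := by rw [hb]; exact (hv i).apply_eq_smul
          rw [LinearMap.comp_apply, h1, map_smul, LinearMap.smul_apply]
          by_cases hij : i = j
          · rw [hij]
          · simp [Finsupp.single_apply, hij]
        exact LinearMap.congr_fun this w
      have hzero : ∀ w, S w = (κ : ℂ) • w → ∀ j, μ j ≠ κ → b.coord j w = 0 := by
        intro w hw j hj
        have h1 := hrepr j w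
        rw [hw, map_smul, smul_eq_mul] at h1
        have h2 : (μ j - κ) * b.coord j w = 0 := by linear_combination -h1
        exact (mul_eq_zero.mp h2).resolve_left (sub_ne_zero.mpr hj)
      obtain ⟨u, hu⟩ := hκ.exists_hasEigenvector
      have hSu := hu.apply_eq_smul
      have hu0 : u ≠ 0 := hu.2
      obtain ⟨i, hi⟩ : ∃ i, b.coord i u ≠ 0 := by
        by_contra! h
        exact hu0 (b.forall_coord_eq_zero_iff.mp h)
      have hμi : μ i = κ := by
        by_contra h
        exact hi (hzero u hSu i h)
      have hSA : S (T₁ (ρ u)) = (κ : ℂ) • T₁ (ρ u) := by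
        have h1 : S (T₁ (ρ u)) = T₁ (ρ (S u)) := by rw [hS, hS]
        rw [h1, hSu, hρsmul, map_smul, Complex.conj_ofReal]
      obtain ⟨c, hc⟩ : ∃ c : ℂ, T₁ (ρ u) = c • u := by
        refine ⟨b.coord i (T₁ (ρ u)) / b.coord i u, ?_⟩
        apply b.ext_elem
        intro j
        change b.coord j _ = b.coord j _
        rw [map_smul, smul_eq_mul]
        by_cases hij : j = i
        · rw [hij, div_mul_cancel₀ _ hi]
        · have hj : μ j ≠ κ := fun h => hij (hμ (h.trans hμi.symm))
          rw [hzero _ hSA j hj, hzero _ hSu j hj, mul_zero]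
      have h2 : ((κ : ℂ)) • u = ((starRingEnd ℂ) c * c) • u := by
        rw [← hSu, hS, hc, hρsmul, map_smul, hc, smul_smul]
      have h3 : (κ : ℂ) = (starRingEnd ℂ) c * c := smul_left_injective ℂ hu0 h2
      rw [mul_comm, Complex.mul_conj] at h3
      have h4 : κ = Complex.normSq c := by exact_mod_cast h3
      have h5 : κ ≠ 0 := by
        have := hκne _ u hu0 hSu
        exact_mod_cast this
      exact lt_of_le_of_ne (h4 ▸ Complex.normSq_nonneg c) h5.symm
    refine ⟨hpos, fun h => ?_⟩
    have := hpos (-1) (by simpa using h)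
    linarith
end

section
/- Let γ ∈ ℂ with γ ≠ 0 and γ ≠ 1. On ℂ⁴ with coordinates (z₁,z₂,w₁,w₂), define the ℂ-linear maps τ₁₁ : (z₁,z₂,w₁,w₂) ↦ (z₁, z₂, −w₁ − γ^{−1}z₂, w₂) and τ₁₂ : (z₁,z₂,w₁,w₂) ↦ (z₁, z₂, w₁, −w₂ − (1 − conj γ)^{−1}z₁), the conjugate-linear involution ρ : (z₁,z₂,w₁,w₂) ↦ (conj w₁, conj w₂, conj z₁, conj z₂), and τ₂ⱼ := ρ∘τ₁ⱼ∘ρ for j = 1,2. Then: (a) τ₁₁, τ₁₂, τ₂₁, τ₂₂ are involutions and τ₁₁∘τ₁₂ = τ₁₂∘τ₁₁; (b) τ₁₁∘τ₂₁ = τ₂₁∘τ₁₁ and τ₁₂∘τ₂₂ = τ₂₂∘τ₁₂; (c) setting σ₁ := τ₁₁∘τ₂₂, σ₂ := τ₁₂∘τ₂₁, τᵢ := τᵢ₁∘τᵢ₂ for i = 1,2, and σ := τ₁∘τ₂, one has σ = σ₁∘σ₂ = σ₂∘σ₁; (d) σ₂^{−1} = ρ∘σ₁∘ρ and σ^{−1}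 = ρ∘σ∘ρ. -/
/-- The deck transformations of the complexified quadric of complex type: the four maps
`τ₁₁, τ₁₂, τ₂₁, τ₂₂` are involutions, `τ₁₁, τ₁₂` commute, `τ₁ⱼ` commutes with `τ₂ⱼ`,
`σ = σ₁∘σ₂ = σ₂∘σ₁`, and `σ₂⁻¹ = ρ∘σ₁∘ρ`, `σ⁻¹ = ρ∘σ∘ρ`. -/
theorem stmt_8 (γ : ℂ) (hγ0 : γ ≠ 0) (hγ1 : γ ≠ 1)
    (τ11 τ12 τ21 τ22 τ1 τ2 σ1 σ2 σ ρ : ℂ × ℂ × ℂ × ℂ → ℂ × ℂ × ℂ × ℂ)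
    (hτ11 : ∀ z₁ z₂ w₁ w₂ : ℂ, τ11 (z₁, z₂, w₁, w₂) = (z₁, z₂, -w₁ - γ⁻¹ * z₂, w₂))
    (hτ12 : ∀ z₁ z₂ w₁ w₂ : ℂ,
      τ12 (z₁, z₂, w₁, w₂) = (z₁, z₂, w₁, -w₂ - (1 - (starRingEnd ℂ) γ)⁻¹ * z₁))
    (hρ : ∀ z₁ z₂ w₁ w₂ : ℂ,
      ρ (z₁, z₂, w₁, w₂) =
        ((starRingEnd ℂ) w₁, (starRingEnd ℂ) w₂, (starRingEnd ℂ) z₁, (starRingEnd ℂ) z₂))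
    (hτ21 : τ21 = ρ ∘ τ11 ∘ ρ) (hτ22 : τ22 = ρ ∘ τ12 ∘ ρ)
    (hσ1 : σ1 = τ11 ∘ τ22) (hσ2 : σ2 = τ12 ∘ τ21)
    (hτ1 : τ1 = τ11 ∘ τ12) (hτ2 : τ2 = τ21 ∘ τ22) (hσ : σ = τ1 ∘ τ2) :
    (τ11 ∘ τ11 = id ∧ τ12 ∘ τ12 = id ∧ τ21 ∘ τ21 = id ∧ τ22 ∘ τ22 = id ∧
      τ11 ∘ τ12 = τ12 ∘ τ11) ∧
    (τ11 ∘ τ21 = τ21 ∘ τ11 ∧ τ12 ∘ τ22 = τ22 ∘ τ12) ∧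
    (σ = σ1 ∘ σ2 ∧ σ = σ2 ∘ σ1) ∧
    (σ2 ∘ (ρ ∘ σ1 ∘ ρ) = id ∧ (ρ ∘ σ1 ∘ ρ) ∘ σ2 = id ∧
      σ ∘ (ρ ∘ σ ∘ ρ) = id ∧ (ρ ∘ σ ∘ ρ) ∘ σ = id) := by
  subst hσ hτ1 hτ2 hσ1 hσ2 hτ21 hτ22
  refine ⟨⟨?_, ?_, ?_, ?_, ?_⟩, ⟨?_, ?_⟩, ⟨?_, ?_⟩, ?_, ?_, ?_, ?_⟩ <;>
  · funext ⟨a, b, c, d⟩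
    simp only [Function.comp_apply, hτ11, hτ12, hρ, id, map_sub, map_neg, map_mul, map_inv₀,
      map_one, Complex.conj_conj]
    try (refine Prod.ext ?_ (Prod.ext ?_ (Prod.ext ?_ ?_)) <;> dsimp only <;> ring)
end

section
/- Let γ ∈ ℂ with Re γ > 1/2 and Im γ > 0. On ℂ⁴ with coordinates (z₁,z₂,w₁,w₂), define τ₁₁ : (z₁,z₂,w₁,w₂) ↦ (z₁, z₂, −w₁ − γ^{−1}z₂, w₂), τ₁₂ : (z₁,z₂,w₁,w₂) ↦ (z₁, z₂, w₁, −w₂ − (1 − conj γ)^{−1}z₁), the conjugate-linear involution ρ : (z₁,z₂,w₁,w₂) ↦ (conj w₁, conj w₂, conj z₁, conj z₂), and τ₂ⱼ := ρ∘τ₁ⱼ∘ρ for j = 1,2. Let σ := (τ₁₁∘τ₁₂)∘(τ₂₁∘τ₂₂). Then σ is a ℂ-linear automorphism of ℂ⁴ whose set of eigenvalues is exactly {μ, μ^{−1}, conj μ, (conj μ)^{−1}}, where μ := (γ^{−1} − 1)^{−1}, and these four numbers are pairwise distinct. -/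
/-- For `Re γ > 1/2`, `Im γ > 0`, the composition `σ = (τ₁₁∘τ₁₂)∘(τ₂₁∘τ₂₂)` of the deck
transformations of the complex-type quadric is a ℂ-linear automorphism of `ℂ⁴` whose
eigenvalue set is exactly `{μ, μ⁻¹, conj μ, (conj μ)⁻¹}` with `μ = (γ⁻¹ − 1)⁻¹`, and these
four numbers are pairwise distinct. -/
theorem stmt_9 (γ : ℂ) (hre : 1 / 2 < γ.re) (him : 0 < γ.im)
    (μ : ℂ) (hμ : μ = (γ⁻¹ - 1)⁻¹)
    (τ11 τ12 τ21 τ22 σ ρ : ℂ × ℂ × ℂ × ℂ → ℂ × ℂ × ℂ × ℂ)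
    (hτ11 : ∀ z₁ z₂ w₁ w₂ : ℂ, τ11 (z₁, z₂, w₁, w₂) = (z₁, z₂, -w₁ - γ⁻¹ * z₂, w₂))
    (hτ12 : ∀ z₁ z₂ w₁ w₂ : ℂ,
      τ12 (z₁, z₂, w₁, w₂) = (z₁, z₂, w₁, -w₂ - (1 - (starRingEnd ℂ) γ)⁻¹ * z₁))
    (hρ : ∀ z₁ z₂ w₁ w₂ : ℂ,
      ρ (z₁, z₂, w₁, w₂) =
        ((starRingEnd ℂ) w₁, (starRingEnd ℂ) w₂, (starRingEnd ℂ) z₁, (starRingEnd ℂ) z₂))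
    (hτ21 : τ21 = ρ ∘ τ11 ∘ ρ) (hτ22 : τ22 = ρ ∘ τ12 ∘ ρ)
    (hσ : σ = (τ11 ∘ τ12) ∘ (τ21 ∘ τ22)) :
    (∀ v w : ℂ × ℂ × ℂ × ℂ, σ (v + w) = σ v + σ w) ∧
    (∀ (c : ℂ) (v : ℂ × ℂ × ℂ × ℂ), σ (c • v) = c • σ v) ∧
    Function.Bijective σ ∧
    (∀ κ : ℂ, (∃ v : ℂ × ℂ × ℂ × ℂ, v ≠ 0 ∧ σ v = κ • v) ↔
      κ = μ ∨ κ = μ⁻¹ ∨ κ = (starRingEnd ℂ) μ ∨ κ = ((starRingEnd ℂ) μ)⁻¹) ∧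
    (μ ≠ μ⁻¹ ∧ μ ≠ (starRingEnd ℂ) μ ∧ μ ≠ ((starRingEnd ℂ) μ)⁻¹ ∧
      μ⁻¹ ≠ (starRingEnd ℂ) μ ∧ μ⁻¹ ≠ ((starRingEnd ℂ) μ)⁻¹ ∧
      (starRingEnd ℂ) μ ≠ ((starRingEnd ℂ) μ)⁻¹) := by
  have hγ : γ ≠ 0 := by
    rintro rfl
    simp at him
  have hd : 1 - γ ≠ 0 := by
    intro h
    have := congrArg Complex.im h
    simp at this
    exact (ne_of_gt him) this
  obtain ⟨g, hg⟩ : ∃ g, g = (starRingEnd ℂ) γ := ⟨_, rfl⟩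
  have hg0 : g ≠ 0 := by
    rw [hg]
    simpa using hγ
  have he : 1 - g ≠ 0 := by
    intro h
    have := congrArg Complex.im h
    simp [hg] at this
    exact (ne_of_gt him) this
  have hμ1 : μ = γ / (1 - γ) := by
    rw [hμ]
    have : γ⁻¹ - 1 = (1 - γ) / γ := by field_simp
    rw [this, inv_div]
  have hμ2 : (starRingEnd ℂ) μ = g / (1 - g) := by
    rw [hμ1, hg]
    simp
  have hs : ∀ z₁ z₂ w₁ w₂ : ℂ, σ (z₁, z₂, w₁, w₂) =
      (-z₁ - g⁻¹ * w₂, -z₂ - (1 - γ)⁻¹ * w₁, -w₁ - γ⁻¹ * (-z₂ - (1 - γ)⁻¹ * w₁),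
        -w₂ - (1 - g)⁻¹ * (-z₁ - g⁻¹ * w₂)) := by
    intro z₁ z₂ w₁ w₂
    simp [hσ, hτ21, hτ22, hρ, hτ11, hτ12, hg]
  have h12 : γ ≠ 1 - γ := by
    intro h
    have := congrArg Complex.re h
    simp at this
    linarith
  have hgg : γ ≠ g := by
    intro h
    have := congrArg Complex.im h
    simp [hg] at this
    linarith
  have hsum : γ + g ≠ 1 := by
    intro h
    have := congrArg Complex.re h
    simp [hg] at this
    linarith
  have hg12 : g ≠ 1 - g := by
    intro h
    have := congrArg Complex.re h
    simp [hg] at this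
    linarith
  rw [hμ2, hμ1, inv_div, inv_div]
  refine ⟨?_, ?_, ?_, ?_, ?_⟩
  · rintro ⟨a, b, c, d⟩ ⟨a2, b2, c2, d2⟩
    simp only [Prod.mk_add_mk, hs, Prod.mk.injEq]
    refine ⟨?_, ?_, ?_, ?_⟩ <;> ring
  · rintro k ⟨a, b, c, d⟩
    simp only [Prod.smul_mk, smul_eq_mul, hs, Prod.mk.injEq]
    refine ⟨?_, ?_, ?_, ?_⟩ <;> ring
  · rw [Function.bijective_iff_has_inverse]
    refine ⟨fun v => (-v.1 - g⁻¹ * (-v.2.2.2 - (1 - g)⁻¹ * v.1),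
      -v.2.1 - (1 - γ)⁻¹ * (-v.2.2.1 - γ⁻¹ * v.2.1),
      -v.2.2.1 - γ⁻¹ * v.2.1, -v.2.2.2 - (1 - g)⁻¹ * v.1), ?_, ?_⟩
    · rintro ⟨a, b, c, d⟩
      simp only [hs, Prod.mk.injEq]
      refine ⟨?_, ?_, ?_, ?_⟩ <;> ring
    · rintro ⟨a, b, c, d⟩
      simp only [hs, Prod.mk.injEq]
      refine ⟨?_, ?_, ?_, ?_⟩ <;> ring
  · intro κ
    constructor
    · rintro ⟨⟨a, b, c, d⟩, hv, h⟩
      simp only [hs, Prod.smul_mk, smul_eq_mul, Prod.mk.injEq] at h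
      obtain ⟨h1, h2, h3, h4⟩ := h
      rw [h2] at h3
      rw [h1] at h4
      field_simp at h1 h2 h3 h4
      have key1 : ∀ x : ℂ, x ≠ 0 → x * ((κ * (1 - γ) - γ) * (κ * γ - (1 - γ))) = 0 →
          κ = γ / (1 - γ) ∨ κ = (1 - γ) / γ := by
        intro x hx hh
        rcases mul_eq_zero.1 ((mul_eq_zero.1 hh).resolve_left hx) with h | h
        · left
          rw [eq_div_iff hd]
          linear_combination h
        · right
          rw [eq_div_iff hγ]
          linear_combination h
      have key2 : ∀ x : ℂ, x ≠ 0 → x * ((κ * (1 - g) - g) * (κ * g - (1 - g))) = 0 →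
          κ = g / (1 - g) ∨ κ = (1 - g) / g := by
        intro x hx hh
        rcases mul_eq_zero.1 ((mul_eq_zero.1 hh).resolve_left hx) with h | h
        · left
          rw [eq_div_iff he]
          linear_combination h
        · right
          rw [eq_div_iff hg0]
          linear_combination h
      by_cases hb : b = 0
      · by_cases hc : c = 0
        · by_cases ha : a = 0
          · by_cases hdd : d = 0
            · subst_vars
              exact absurd rfl hv
            · have := key2 d hdd (by linear_combination -g * (κ + 1) * h4 + κ * h1)
              tauto
          · have := key2 a ha (by linear_combination -(1 - g) * (κ + 1) * h1 + h4)
            tauto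
        · have := key1 c hc (by linear_combination -(1 - γ) * (κ + 1) * h3 + κ * h2)
          tauto
      · have := key1 b hb (by linear_combination -γ * (κ + 1) * h2 + h3)
        tauto
    · rintro (rfl | rfl | rfl | rfl)
      · refine ⟨(0, 1, -1, 0), by simp, ?_⟩
        simp only [hs, Prod.smul_mk, smul_eq_mul, Prod.mk.injEq]
        refine ⟨?_, ?_, ?_, ?_⟩ <;> field_simp <;> ring
      · refine ⟨(0, γ, -(1 - γ), 0), by simp [hγ], ?_⟩
        simp only [hs, Prod.smul_mk, smul_eq_mul, Prod.mk.injEq]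
        refine ⟨?_, ?_, ?_, ?_⟩ <;> field_simp <;> ring
      · refine ⟨(1 - g, 0, 0, -g), by simp [hg0], ?_⟩
        simp only [hs, Prod.smul_mk, smul_eq_mul, Prod.mk.injEq]
        refine ⟨?_, ?_, ?_, ?_⟩ <;> field_simp <;> ring
      · refine ⟨(1, 0, 0, -1), by simp, ?_⟩
        simp only [hs, Prod.smul_mk, smul_eq_mul, Prod.mk.injEq]
        refine ⟨?_, ?_, ?_, ?_⟩ <;> field_simp <;> ring
  · refine ⟨?_, ?_, ?_, ?_, ?_, ?_⟩
    · rw [Ne, div_eq_div_iff hd hγ]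
      intro h
      exact h12 (by linear_combination h)
    · rw [Ne, div_eq_div_iff hd he]
      intro h
      exact hgg (by linear_combination h)
    · rw [Ne, div_eq_div_iff hd hg0]
      intro h
      exact hsum (by linear_combination h)
    · rw [Ne, div_eq_div_iff hγ he]
      intro h
      exact hsum (by linear_combination -h)
    · rw [Ne, div_eq_div_iff hγ hg0]
      intro h
      exact hgg (by linear_combination -h)
    · rw [Ne, div_eq_div_iff he hg0]
      intro h
      exact hg12 (by linear_combination h)
end

section
/- Let p ≥ 1 and let F : ℂ^p → ℂ^p be holomorphic in a neighborhood of 0 with F(0) = 0 and derivative DF(0) = id. Then there exists a map ψ : ℂ^p → ℂ^p, holomorphic in a neighborhood of 0, with ψ(0) = 0 and Dψ(0) = id, such that: (i) ψ preserves every coordinate hyperplane, i.e. for each j and for all ζ sufficiently close to 0, ζ_j = 0 implies ψ_j(ζ) = 0; and (ii) for each j, the j-th component of F∘ψ − id is independent of ζ_j, i.e. ∂((F∘ψ)_j)/∂ζ_j ≡ 1 on a neighborhood of 0. Moreover ψ is unique as a germ at 0: any two holomorphic maps with these properties coincide in a neighborhood of 0. -/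
/-- `ψ` is a normalizing map for `F`: it is holomorphic near `0`, fixes `0`, is tangent to the
identity, preserves every coordinate hyperplane near `0`, and the `j`-th component of `F∘ψ`
has partial derivative `1` in the `j`-th direction near `0` (i.e. `(F∘ψ − id)_j` is
independent of `ζ_j`). -/
def IsNormalizingMap (p : ℕ) (F ψ : (Fin p → ℂ) → (Fin p → ℂ)) : Prop :=
  AnalyticAt ℂ ψ 0 ∧ ψ 0 = 0 ∧
  fderiv ℂ ψ 0 = ContinuousLinearMap.id ℂ (Fin p → ℂ) ∧
  (∀ᶠ ζ in nhds (0 : Fin p → ℂ), ∀ j, ζ j = 0 → ψ ζ j = 0) ∧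
  (∀ᶠ ζ in nhds (0 : Fin p → ℂ), ∀ j,
    fderiv ℂ (fun ζ' => F (ψ ζ') j) ζ (Pi.single j 1) = 1)

open Filter Topology

namespace Stmt10

/-- Kill the coordinates in `S`. -/
noncomputable def prj {p : ℕ} (S : Finset (Fin p)) : (Fin p → ℂ) →L[ℂ] (Fin p → ℂ) :=
  ContinuousLinearMap.pi fun j => if j ∈ S then 0 else ContinuousLinearMap.proj j

lemma prj_apply {p : ℕ} (S : Finset (Fin p)) (ζ : Fin p → ℂ) (j : Fin p) :
    prj S ζ j = if j ∈ S then 0 else ζ j := by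
  unfold prj
  by_cases h : j ∈ S <;> simp [h]

lemma prj_empty {p : ℕ} (ζ : Fin p → ℂ) : prj ∅ ζ = ζ := by
  ext j; simp [prj_apply]

lemma prj_prj {p : ℕ} (S : Finset (Fin p)) (j : Fin p) (ζ : Fin p → ℂ) :
    prj {j} (prj S ζ) = prj (insert j S) ζ := by
  ext k; simp only [prj_apply, Finset.mem_insert, Finset.mem_singleton]
  by_cases h : k = j <;> simp [h]

lemma prj_prj' {p : ℕ} (S : Finset (Fin p)) (j : Fin p) (ζ : Fin p → ℂ) :
    prj S (prj {j} ζ) = prj (insert j S) ζ := by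
  ext k; simp only [prj_apply, Finset.mem_insert, Finset.mem_singleton]
  by_cases h : k = j <;> simp [h]

lemma prj_of_zero {p : ℕ} (j : Fin p) (ζ : Fin p → ℂ) (h : ζ j = 0) : prj {j} ζ = ζ := by
  ext k; simp only [prj_apply, Finset.mem_singleton]
  by_cases hk : k = j <;> simp [hk, h]

lemma prj_tendsto {p : ℕ} (S : Finset (Fin p)) :
    Tendsto (prj S) (𝓝 (0 : Fin p → ℂ)) (𝓝 0) := by
  have := (prj S).continuous.tendsto (0 : Fin p → ℂ)
  rwa [map_zero] at this

/-- The finite system. -/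
def phi {p : ℕ} (F : (Fin p → ℂ) → (Fin p → ℂ)) (y : Finset (Fin p) → Fin p → ℂ) :
    Finset (Fin p) → Fin p → ℂ :=
  fun S j => F (y S) j - F (y (insert j S)) j + y (insert j S) j

/-- The total projection map. -/
noncomputable def tot (p : ℕ) : (Fin p → ℂ) →L[ℂ] (Finset (Fin p) → Fin p → ℂ) :=
  ContinuousLinearMap.pi fun S => prj S

lemma tot_apply {p : ℕ} (ζ : Fin p → ℂ) (S : Finset (Fin p)) : tot p ζ S = prj S ζ := rfl

variable {p : ℕ} {F : (Fin p → ℂ) → (Fin p → ℂ)}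

lemma phi_zero (hF0 : F 0 = 0) : phi F 0 = 0 := by
  ext S j; simp [phi, hF0]

lemma analytic_comp_eval (hF : AnalyticAt ℂ F 0) (S : Finset (Fin p)) :
    AnalyticAt ℂ (fun y : Finset (Fin p) → Fin p → ℂ => F (y S)) 0 := by
  have h1 : AnalyticAt ℂ (fun y : Finset (Fin p) → Fin p → ℂ => y S) 0 :=
    (ContinuousLinearMap.proj (R := ℂ) (φ := fun _ : Finset (Fin p) => Fin p → ℂ) S).analyticAt 0
  exact AnalyticAt.fun_comp (g := F) (f := fun y : Finset (Fin p) → Fin p → ℂ => y S) hF h1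

lemma phi_analytic (hF : AnalyticAt ℂ F 0) : AnalyticAt ℂ (phi F) 0 := by
  rw [show phi F = fun y S j => F (y S) j - F (y (insert j S)) j + y (insert j S) j from rfl]
  refine AnalyticAt.pi fun S => AnalyticAt.pi fun j => ?_
  have h1 : ∀ S : Finset (Fin p),
      AnalyticAt ℂ (fun y : Finset (Fin p) → Fin p → ℂ => y S) 0 := fun S =>
    (ContinuousLinearMap.proj (R := ℂ) (φ := fun _ : Finset (Fin p) => Fin p → ℂ) S).analyticAt 0
  have h2 : ∀ (g : (Finset (Fin p) → Fin p → ℂ) → Fin p → ℂ), AnalyticAt ℂ g 0 →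
      AnalyticAt ℂ (fun y => g y j) 0 := fun g hg => by
    rw [analyticAt_pi_iff] at hg; exact hg j
  exact ((h2 _ (analytic_comp_eval hF S)).sub (h2 _ (analytic_comp_eval hF _))).add (h2 _ (h1 _))

lemma phi_hasFDerivAt (hF : AnalyticAt ℂ F 0)
    (hDF : fderiv ℂ F 0 = ContinuousLinearMap.id ℂ (Fin p → ℂ)) :
    HasFDerivAt (phi F)
      ((ContinuousLinearEquiv.refl ℂ (Finset (Fin p) → Fin p → ℂ) :
        (Finset (Fin p) → Fin p → ℂ) →L[ℂ] (Finset (Fin p) → Fin p → ℂ))) 0 := by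
  have hd : HasFDerivAt F (ContinuousLinearMap.id ℂ (Fin p → ℂ)) 0 :=
    hDF ▸ hF.differentiableAt.hasFDerivAt
  have h1 : ∀ S : Finset (Fin p),
      HasFDerivAt (fun y : Finset (Fin p) → Fin p → ℂ => y S)
        (ContinuousLinearMap.proj (R := ℂ) (φ := fun _ : Finset (Fin p) => Fin p → ℂ) S) 0 :=
    fun S => (ContinuousLinearMap.proj (R := ℂ)
      (φ := fun _ : Finset (Fin p) => Fin p → ℂ) S).hasFDerivAt
  have h3 : ∀ S : Finset (Fin p),
      HasFDerivAt (fun y : Finset (Fin p) → Fin p → ℂ => F (y S))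
        (ContinuousLinearMap.proj (R := ℂ) (φ := fun _ : Finset (Fin p) => Fin p → ℂ) S) 0 :=
    fun S => HasFDerivAt.comp (g := F) (g' := ContinuousLinearMap.id ℂ (Fin p → ℂ))
      (f := fun y : Finset (Fin p) → Fin p → ℂ => y S) 0 hd (h1 S)
  refine hasFDerivAt_pi'.2 fun S => hasFDerivAt_pi'.2 fun j => ?_
  have h4 := (((hasFDerivAt_pi'.1 (h3 S)) j).sub ((hasFDerivAt_pi'.1 (h3 (insert j S))) j)).add
    ((hasFDerivAt_pi'.1 (h1 (insert j S))) j)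
  refine h4.congr_fderiv ?_
  ext y
  simp

lemma exists_inverse (hF : AnalyticAt ℂ F 0) (hF0 : F 0 = 0)
    (hDF : fderiv ℂ F 0 = ContinuousLinearMap.id ℂ (Fin p → ℂ)) :
    ∃ U ∈ 𝓝 (0 : Finset (Fin p) → Fin p → ℂ), Set.InjOn (phi F) U ∧
      ∃ G : (Finset (Fin p) → Fin p → ℂ) → (Finset (Fin p) → Fin p → ℂ),
        AnalyticAt ℂ G 0 ∧ G 0 = 0 ∧ HasFDerivAt G (ContinuousLinearMap.id ℂ _) 0 ∧
        ∀ᶠ z in 𝓝 0, phi F (G z) = z := by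
  have hc : ContDiffAt ℂ ⊤ (phi F) 0 := (phi_analytic hF).contDiffAt
  have hd := phi_hasFDerivAt hF hDF
  have hs := hc.hasStrictFDerivAt' hd (by simp)
  refine ⟨(hs.toOpenPartialHomeomorph _).source,
    (hs.toOpenPartialHomeomorph _).open_source.mem_nhds hs.mem_toOpenPartialHomeomorph_source,
    (hs.toOpenPartialHomeomorph _).injOn, hs.localInverse _ _ _, ?_, ?_, ?_, ?_⟩
  · have := hc.to_localInverse hd (by simp)
    rw [phi_zero hF0] at this
    exact this.analyticAt
  · have := hs.localInverse_apply_image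
    rwa [phi_zero hF0] at this
  · have := hs.to_localInverse.hasFDerivAt
    rw [phi_zero hF0] at this
    exact this
  · have := hs.eventually_right_inverse
    rwa [phi_zero hF0] at this

/-- Key functional equation of a normalizing map. -/
lemma key_eq (hF : AnalyticAt ℂ F 0) {ψ : (Fin p → ℂ) → (Fin p → ℂ)}
    (h : IsNormalizingMap p F ψ) :
    ∀ᶠ ζ in 𝓝 (0 : Fin p → ℂ), ∀ j,
      F (ψ ζ) j - F (ψ (prj {j} ζ)) j + ψ (prj {j} ζ) j = ζ j := by
  obtain ⟨ha, h0, -, hi, hii⟩ := h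
  have hFψ : AnalyticAt ℂ (fun ζ => F (ψ ζ)) 0 := by
    rw [← h0] at hF
    exact AnalyticAt.fun_comp hF ha
  obtain ⟨r, hr, hball⟩ := Metric.eventually_nhds_iff_ball.1
    ((hFψ.eventually_analyticAt.and hi).and hii)
  refine Metric.eventually_nhds_iff_ball.2 ⟨r, hr, fun ζ hζ j => ?_⟩
  have hmem : ∀ t ∈ Metric.ball (0 : ℂ) r, Function.update ζ j t ∈
      Metric.ball (0 : Fin p → ℂ) r := by
    intro t ht
    rw [mem_ball_zero_iff] at *
    rw [pi_norm_lt_iff hr] at *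
    intro k
    by_cases hk : k = j
    · subst hk; simpa using ht
    · simpa [Function.update_of_ne hk] using hζ k
  have hder : ∀ t ∈ Metric.ball (0 : ℂ) r,
      HasDerivAt (fun t => F (ψ (Function.update ζ j t)) j - t) 0 t := by
    intro t ht
    obtain ⟨⟨h1, -⟩, h3⟩ := hball _ (hmem t ht)
    have h4 : DifferentiableAt ℂ (fun ζ' => F (ψ ζ') j) (Function.update ζ j t) :=
      (differentiableAt_pi.1 h1.differentiableAt) j
    have h5 := (h4.hasFDerivAt.comp_hasDerivAt t (hasDerivAt_update ζ j t)).sub (hasDerivAt_id t)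
    rw [h3 j, sub_self] at h5
    exact h5
  have hζj : ζ j ∈ Metric.ball (0 : ℂ) r := by
    rw [mem_ball_zero_iff] at *
    exact (norm_le_pi_norm ζ j).trans_lt hζ
  have hz : (0 : ℂ) ∈ Metric.ball (0 : ℂ) r := Metric.mem_ball_self hr
  have hconst := Metric.isOpen_ball.is_const_of_deriv_eq_zero
    (convex_ball (0 : ℂ) r).isPreconnected
    (fun t ht => (hder t ht).differentiableAt.differentiableWithinAt)
    (fun t ht => (hder t ht).deriv) hζj hz
  have hup : Function.update ζ j 0 = prj {j} ζ := by
    ext k; simp only [prj_apply, Finset.mem_singleton, Function.update_apply]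
  simp only [Function.update_eq_self, hup] at hconst
  have h6 := (hball _ (hup ▸ hmem 0 hz)).1.2 j (by simp [prj_apply])
  rw [h6]
  linear_combination hconst

lemma uniq (hF : AnalyticAt ℂ F 0) (hF0 : F 0 = 0)
    (hDF : fderiv ℂ F 0 = ContinuousLinearMap.id ℂ (Fin p → ℂ))
    (ψ₁ ψ₂ : (Fin p → ℂ) → (Fin p → ℂ))
    (h₁ : IsNormalizingMap p F ψ₁) (h₂ : IsNormalizingMap p F ψ₂) :
    ψ₁ =ᶠ[𝓝 (0 : Fin p → ℂ)] ψ₂ := by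
  obtain ⟨U, hU, hinj, -⟩ := exists_inverse hF hF0 hDF
  have hphi : ∀ ψ, IsNormalizingMap p F ψ → ∀ᶠ ζ in 𝓝 (0 : Fin p → ℂ),
      (fun S => ψ (prj S ζ)) ∈ U ∧ phi F (fun S => ψ (prj S ζ)) = tot p ζ := by
    intro ψ h
    refine Filter.Eventually.and ?_ ?_
    · have ht : Tendsto (fun ζ : Fin p → ℂ => (fun S => ψ (prj S ζ))) (𝓝 0) (𝓝 0) := by
        rw [tendsto_pi_nhds]
        intro S
        have h1 : Tendsto ψ (𝓝 0) (𝓝 0) := by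
          have := h.1.continuousAt.tendsto
          rwa [h.2.1] at this
        exact h1.comp (prj_tendsto S)
      exact ht hU
    · have := Filter.eventually_all.2 fun S : Finset (Fin p) =>
        (prj_tendsto S).eventually (key_eq hF h)
      filter_upwards [this] with ζ hζ
      ext S j
      have := hζ S j
      rw [prj_prj] at this
      exact this
  filter_upwards [hphi ψ₁ h₁, hphi ψ₂ h₂] with ζ ⟨a1, a2⟩ ⟨b1, b2⟩
  have := congrFun (hinj a1 b1 (a2.trans b2.symm)) ∅
  simpa [prj_empty] using this

lemma exist (hF : AnalyticAt ℂ F 0) (hF0 : F 0 = 0)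
    (hDF : fderiv ℂ F 0 = ContinuousLinearMap.id ℂ (Fin p → ℂ)) :
    ∃ ψ, IsNormalizingMap p F ψ := by
  obtain ⟨U, hU, hinj, G, hGa, hG0, hGd, hG⟩ := exists_inverse hF hF0 hDF
  have htot : Tendsto (tot p) (𝓝 0) (𝓝 0) := by
    have := (tot p).continuous.tendsto 0
    rwa [map_zero] at this
  set y : (Fin p → ℂ) → Finset (Fin p) → Fin p → ℂ := fun ζ => G (tot p ζ) with hy
  have hya : AnalyticAt ℂ y 0 := by
    refine AnalyticAt.fun_comp (g := G) (f := tot p) ?_ ((tot p).analyticAt 0)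
    rwa [map_zero]
  have hy0 : y 0 = 0 := by simp [hy, hG0]
  have hyd : HasFDerivAt y (tot p) 0 := by
    have h1 : HasFDerivAt G (ContinuousLinearMap.id ℂ _) (tot p 0) := by rwa [map_zero]
    exact h1.comp 0 (tot p).hasFDerivAt
  have hyt : Tendsto y (𝓝 0) (𝓝 0) := by
    have := hya.continuousAt.tendsto
    rwa [hy0] at this
  have hyphi : ∀ᶠ ζ in 𝓝 0, phi F (y ζ) = tot p ζ := htot.eventually hG
  -- compatibility
  have hcomp : ∀ᶠ ζ in 𝓝 0, ∀ j : Fin p, ∀ S, y ζ (insert j S) = y (prj {j} ζ) S := by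
    refine Filter.eventually_all.2 fun j => ?_
    have ht : Tendsto (fun ζ : Fin p → ℂ => (fun S => y ζ (insert j S))) (𝓝 0) (𝓝 0) := by
      rw [tendsto_pi_nhds]
      intro S
      exact (tendsto_pi_nhds.1 hyt) (insert j S)
    filter_upwards [ht hU, (hyt.comp (prj_tendsto {j})) hU, hyphi,
      (prj_tendsto {j}).eventually hyphi] with ζ a1 a2 a3 a4
    have : (fun S => y ζ (insert j S)) = y (prj {j} ζ) := by
      refine hinj a1 a2 ?_
      rw [a4]
      ext S k
      rw [tot_apply, prj_prj', ← tot_apply, ← a3]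
      simp only [phi]
      rw [Finset.insert_comm]
    exact fun S => congrFun this S
  set ψ : (Fin p → ℂ) → Fin p → ℂ := fun ζ => y ζ ∅ with hψ
  have hψa : AnalyticAt ℂ ψ 0 := (analyticAt_pi_iff.1 hya) ∅
  have hψ0 : ψ 0 = 0 := by simp [hψ, hy0]
  have hkey : ∀ᶠ ζ in 𝓝 (0 : Fin p → ℂ), ∀ j,
      F (ψ ζ) j - F (ψ (prj {j} ζ)) j + ψ (prj {j} ζ) j = ζ j := by
    filter_upwards [hcomp, hyphi] with ζ h1 h2 j
    have h3 := congrFun (congrFun h2 ∅) j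
    rw [tot_apply, prj_empty] at h3
    simp only [phi, h1] at h3
    exact h3
  refine ⟨ψ, hψa, hψ0, ?_, ?_, ?_⟩
  · rw [((hasFDerivAt_pi'.1 hyd) ∅).fderiv]
    ext1 ζ
    exact prj_empty ζ
  · filter_upwards [hkey] with ζ h j hj
    have := h j
    rw [prj_of_zero j ζ hj] at this
    simpa [hj] using this
  · have hFψ : AnalyticAt ℂ (fun ζ => F (ψ ζ)) 0 := by
      rw [← hψ0] at hF
      exact AnalyticAt.fun_comp hF hψa
    have hg : AnalyticAt ℂ (fun ζ => F (ψ ζ) - ψ ζ) 0 := hFψ.sub hψa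
    have hev := Filter.eventually_all.2 fun j : Fin p =>
      (prj_tendsto {j}).eventually hg.eventually_analyticAt
    filter_upwards [hkey.eventually_nhds, hev] with ζ h1 h2 j
    have h3 : (fun ζ' => F (ψ ζ') j) =ᶠ[𝓝 ζ]
        fun ζ' => ζ' j + (F (ψ (prj {j} ζ')) - ψ (prj {j} ζ')) j := by
      filter_upwards [h1] with ζ' h
      rw [Pi.sub_apply, ← h j]
      ring
    rw [h3.fderiv_eq]
    have h4 : HasFDerivAt (fun ζ' => (F (ψ ζ') - ψ ζ') j) _ (prj {j} ζ) :=
      ((differentiableAt_pi.1 (h2 j).differentiableAt) j).hasFDerivAt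
    have h5 := (ContinuousLinearMap.proj (R := ℂ) (φ := fun _ : Fin p => ℂ) j).hasFDerivAt
      (x := ζ) |>.add (h4.comp ζ (prj {j}).hasFDerivAt)
    have h6 : prj {j} (Pi.single j (1 : ℂ)) = 0 := by
      ext k
      by_cases hk : k = j <;> simp [prj_apply, hk]
    erw [h5.fderiv]
    simp [h6]

end Stmt10

/-- For every holomorphic germ `F : (ℂ^p, 0) → (ℂ^p, 0)` tangent to the identity there exists
a normalizing map `ψ`, unique as a germ at `0`. -/
theorem stmt_10 (p : ℕ) (hp : 1 ≤ p) (F : (Fin p → ℂ) → (Fin p → ℂ))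
    (hF : AnalyticAt ℂ F 0) (hF0 : F 0 = 0)
    (hDF : fderiv ℂ F 0 = ContinuousLinearMap.id ℂ (Fin p → ℂ)) :
    (∃ ψ, IsNormalizingMap p F ψ) ∧
    ∀ ψ₁ ψ₂, IsNormalizingMap p F ψ₁ → IsNormalizingMap p F ψ₂ →
      ψ₁ =ᶠ[nhds (0 : Fin p → ℂ)] ψ₂ := by
  exact ⟨Stmt10.exist hF hF0 hDF, Stmt10.uniq hF hF0 hDF⟩
end

section
/- Let e* ≥ 1, h* ≥ 0, s* ≥ 0 be integers and p := e* + h* + 2s*. Let γ₁,…,γ_p ∈ ℂ satisfy: γ_e ∈ (0,1/2) for 1 ≤ e ≤ e*; γ_h ∈ (1/2,∞) for e* < h ≤ e*+h*; Re γ_s > 1/2 and Im γ_s > 0 for e*+h* < s ≤ p−s*; and γ_{s+s*} = 1 − conj γ_s for e*+h* < s ≤ p−s*. Assume the p complex numbers γ_e² (1 ≤ e ≤ e*), γ_h² (e* < h ≤ e*+h*), γ_s(1−γ_s) and (conj γ_s)(1−conj γ_s) (e*+h* < s ≤ p−s*) are pairwise distinct. Let Γ be the p×p complex matrix with entries Γ_{jj}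 = γ_j for 1 ≤ j ≤ e*+h*, Γ_{s,s+s*} = γ_s and Γ_{s+s*,s} = γ_{s+s*} for e*+h* < s ≤ p−s*, and all other entries 0; then Γ is invertible, and there exists no matrix A ∈ M_p(ℂ) satisfying both (conj A)·A = I_p and conj(Γ^{−1}+A)·(Γ^{−1}+A) = I_p, where conj denotes the entrywise complex conjugate matrix. -/
open Matrix in
theorem core_obstruction {n : Type*} [Fintype n] [DecidableEq n] (Γ : Matrix n n ℂ) (d : n → ℂ)
    (hD : Γ.map (starRingEnd ℂ) * Γ = Matrix.diagonal d) (hd : ∀ i, d i ≠ 0) (o : n) (g : ℝ)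
    (hg0 : 0 < g) (hg1 : g < 1 / 2) (hdo : d o = (g : ℂ) ^ 2)
    (hne : ∀ j, j ≠ o → d j ≠ d o) (hcol : ∀ j, Γ j o = if j = o then (g : ℂ) else 0) :
    IsUnit Γ ∧
    ¬ ∃ A : Matrix n n ℂ,
      A.map (starRingEnd ℂ) * A = 1 ∧
      (Γ⁻¹ + A).map (starRingEnd ℂ) * (Γ⁻¹ + A) = 1 := by
  have hu : IsUnit Γ := by
    rw [Matrix.isUnit_iff_isUnit_det, isUnit_iff_ne_zero]
    intro h
    have h2 := congrArg Matrix.det hD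
    rw [Matrix.det_mul, h, mul_zero, Matrix.det_diagonal] at h2
    exact Finset.prod_ne_zero_iff.mpr (fun i _ => hd i) h2.symm
  refine ⟨hu, ?_⟩
  rintro ⟨A, h1, h2⟩
  have hdet := (Matrix.isUnit_iff_isUnit_det _).mp hu
  have hGi : Γ⁻¹ * Γ = 1 := Matrix.nonsing_inv_mul _ hdet
  have hGi' : Γ.map (starRingEnd ℂ) * (Γ⁻¹).map (starRingEnd ℂ) = 1 := by
    rw [← Matrix.map_mul, Matrix.mul_nonsing_inv _ hdet]
    simp
  rw [Matrix.map_add _ (map_add _)] at h2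
  generalize Γ⁻¹ = G at *
  generalize hGc : G.map (starRingEnd ℂ) = Gc at *
  generalize hCc : Γ.map (starRingEnd ℂ) = Γc at *
  generalize hAc : A.map (starRingEnd ℂ) = Ac at *
  have h3 : Gc * G + Gc * A + Ac * G = 0 := by
    have : Gc * G + Gc * A + Ac * G = (Gc + Ac) * (G + A) - Ac * A := by noncomm_ring
    rw [this, h1, h2, sub_self]
  have h4 : 1 + A * Γ + Γc * Ac = 0 := by
    have e : Γc * (Gc * G + Gc * A + Ac * G) * Γ
        = (Γc * Gc) * (G * Γ) + (Γc * Gc) * (A * Γ) + Γc * Ac * (G * Γ) := by noncomm_ring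
    rw [h3, hGi', hGi] at e
    simpa using e.symm
  have hX : A * Γ * (A * Γ) + A * Γ + Matrix.diagonal d = 0 := by
    have e : (1 + A * Γ + Γc * Ac) * (A * Γ)
        = A * Γ + A * Γ * (A * Γ) + Γc * (Ac * A) * Γ := by noncomm_ring
    rw [h4, h1, mul_one, hD, zero_mul] at e
    rw [add_comm (A * Γ * (A * Γ))]
    exact e.symm
  have hAX : Ac * (A * Γ) = Γ := by rw [← mul_assoc, h1, one_mul]
  have hXo : (A * Γ) o o = A o o * g := by
    simp [Matrix.mul_apply, hcol]
  generalize A * Γ = X at *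
  have hcomm : X * Matrix.diagonal d = Matrix.diagonal d * X := by
    have e : Matrix.diagonal d = -(X * X + X) := by
      rw [eq_neg_iff_add_eq_zero, add_comm]; exact hX
    rw [e]; noncomm_ring
  have hXj : ∀ j, j ≠ o → X j o = 0 := by
    intro j hj
    have e := congrFun (congrFun hcomm j) o
    rw [Matrix.mul_diagonal, Matrix.diagonal_mul] at e
    have : (d j - d o) * X j o = 0 := by linear_combination -e
    exact (mul_eq_zero.mp this).resolve_left (sub_ne_zero.mpr (hne j hj))
  have hq : X o o * X o o + X o o + (g : ℂ) ^ 2 = 0 := by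
    have e := congrFun (congrFun hX o) o
    have e2 : (X * X) o o = X o o * X o o := by
      rw [Matrix.mul_apply]
      exact Finset.sum_eq_single o (fun j _ hj => by rw [hXj j hj, mul_zero]) (by simp)
    simpa [e2, hdo] using e
  have hn : (starRingEnd ℂ) (A o o) * X o o = g := by
    have e := congrFun (congrFun hAX o) o
    have e2 : (Ac * X) o o = Ac o o * X o o := by
      rw [Matrix.mul_apply]
      exact Finset.sum_eq_single o (fun j _ hj => by rw [hXj j hj, mul_zero]) (by simp)
    rw [e2, hcol, if_pos rfl, ← hAc] at e
    simpa using e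
  rw [hXo] at hq hn
  generalize A o o = a at *
  have hr := congrArg Complex.re hq
  have hi := congrArg Complex.im hq
  have hm := congrArg Complex.re hn
  simp [pow_two] at hr hi hm
  obtain ⟨x, y⟩ := a
  simp at hr hi hm
  have hm' : x ^ 2 + y ^ 2 = 1 := by
    have : g * (x ^ 2 + y ^ 2 - 1) = 0 := by linear_combination hm
    have := (mul_eq_zero.mp this).resolve_left hg0.ne'
    linarith
  have hi' : y * (2 * g * x + 1) = 0 := by
    have : g * (y * (2 * g * x + 1)) = 0 := by linear_combination hi
    exact (mul_eq_zero.mp this).resolve_left hg0.ne'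
  have hr' : x * (2 * g * x + 1) = 0 := by
    have : g * (x * (2 * g * x + 1)) = 0 := by linear_combination hr + g ^ 2 * hm'
    exact (mul_eq_zero.mp this).resolve_left hg0.ne'
  have hk : 2 * g * x + 1 = 0 := by
    linear_combination x * hr' + y * hi' - (2 * g * x + 1) * hm'
  nlinarith [sq_nonneg y]

/-- The elliptic obstruction to attaching a complex submanifold: with `e* ≥ 1` and Bishop
invariants `γ_j` of elliptic/hyperbolic/complex type whose associated products are pairwise
distinct, the Bishop matrix `Γ` is invertible and there is no matrix `A` with
`conj(A)·A = I` and `conj(Γ⁻¹+A)·(Γ⁻¹+A) = I`. Indices are 1-based via `γ ((i:ℕ)+1)` for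
`i : Fin p`. -/
theorem stmt_16 (estar hstar sstar : ℕ) (hestar : 1 ≤ estar) (p : ℕ)
    (hp : p = estar + hstar + 2 * sstar)
    (γ β : ℕ → ℂ)
    (hγe : ∀ e, 1 ≤ e → e ≤ estar → (γ e).im = 0 ∧ 0 < (γ e).re ∧ (γ e).re < 1 / 2)
    (hγh : ∀ h, estar < h → h ≤ estar + hstar → (γ h).im = 0 ∧ 1 / 2 < (γ h).re)
    (hγs : ∀ s, estar + hstar < s → s ≤ p - sstar → 1 / 2 < (γ s).re ∧ 0 < (γ s).im)
    (hγss : ∀ s, estar + hstar < s → s ≤ p - sstar →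
      γ (s + sstar) = 1 - (starRingEnd ℂ) (γ s))
    (hβeh : ∀ j, 1 ≤ j → j ≤ estar + hstar → β j = γ j ^ 2)
    (hβs : ∀ s, estar + hstar < s → s ≤ p - sstar →
      β s = γ s * (1 - γ s) ∧
      β (s + sstar) = (starRingEnd ℂ) (γ s) * (1 - (starRingEnd ℂ) (γ s)))
    (hdist : ∀ i j, 1 ≤ i → i ≤ p → 1 ≤ j → j ≤ p → i ≠ j → β i ≠ β j)
    (Γ : Matrix (Fin p) (Fin p) ℂ)
    (hΓeh : ∀ i : Fin p, (i : ℕ) + 1 ≤ estar + hstar →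
      ∀ j : Fin p, Γ i j = if j = i then γ ((i : ℕ) + 1) else 0)
    (hΓs : ∀ i : Fin p, estar + hstar < (i : ℕ) + 1 → (i : ℕ) + 1 ≤ p - sstar →
      ∀ j : Fin p, Γ i j = if (j : ℕ) = (i : ℕ) + sstar then γ ((i : ℕ) + 1) else 0)
    (hΓss : ∀ i : Fin p, p - sstar < (i : ℕ) + 1 →
      ∀ j : Fin p, Γ i j = if (j : ℕ) + sstar = (i : ℕ) then γ ((i : ℕ) + 1) else 0) :
    IsUnit Γ ∧
    ¬ ∃ A : Matrix (Fin p) (Fin p) ℂ,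
      A.map (starRingEnd ℂ) * A = 1 ∧
      (Γ⁻¹ + A).map (starRingEnd ℂ) * (Γ⁻¹ + A) = 1 := by
  have hps : p - sstar = estar + hstar + sstar := by omega
  rw [hps] at hγs hγss hβs hΓs hΓss
  have h0 : 0 < p := by omega
  -- the diagonal of conj Γ * Γ
  let σ : ℕ → ℕ := fun i => if i + 1 ≤ estar + hstar then i else
    if i + 1 ≤ estar + hstar + sstar then i + sstar else i - sstar
  have hσp : ∀ i, i < p → σ i < p := by
    intro i hi; simp only [σ]; split_ifs <;> omega
  have hσσ : ∀ i, i < p → σ (σ i) = i := by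
    intro i hi; simp only [σ]; split_ifs <;> omega
  have hσ0 : σ 0 = 0 := by
    simp only [σ]; split_ifs <;> omega
  have hΓ : ∀ i j : Fin p, Γ i j = if (j : ℕ) = σ i then γ ((i : ℕ) + 1) else 0 := by
    intro i j
    by_cases c1 : (i : ℕ) + 1 ≤ estar + hstar
    · rw [hΓeh i c1 j]
      simp only [σ, if_pos c1, Fin.ext_iff]
    · by_cases c2 : (i : ℕ) + 1 ≤ estar + hstar + sstar
      · rw [hΓs i (by omega) c2 j]
        simp only [σ, if_neg c1, if_pos c2]
      · rw [hΓss i (by omega) j]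
        simp only [σ, if_neg c1, if_neg c2]
        congr 1
        apply propext; omega
  have hβ : ∀ i, i < p → (starRingEnd ℂ) (γ (i + 1)) * γ (σ i + 1) = β (σ i + 1) ∧
      β (σ i + 1) ≠ 0 := by
    intro i hi
    have key : ∀ z : ℂ, 0 < z.im → z * (1 - z) ≠ 0 := by
      intro z hz h
      rcases mul_eq_zero.mp h with h | h
      · rw [h] at hz; simp at hz
      · rw [← sub_eq_zero.mp h] at hz; simp at hz
    by_cases c1 : i + 1 ≤ estar + hstar
    · simp only [σ, if_pos c1]
      rw [hβeh (i + 1) (by omega) c1]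
      have hre : (γ (i + 1)).im = 0 ∧ 0 < (γ (i + 1)).re := by
        by_cases c : i + 1 ≤ estar
        · exact ⟨(hγe _ (by omega) c).1, (hγe _ (by omega) c).2.1⟩
        · have := hγh (i + 1) (by omega) c1
          exact ⟨this.1, by linarith [this.2]⟩
      constructor
      · rw [Complex.conj_eq_iff_im.mpr hre.1, pow_two]
      · apply pow_ne_zero
        intro h
        rw [h] at hre; simp at hre
    · by_cases c2 : i + 1 ≤ estar + hstar + sstar
      · simp only [σ, if_neg c1, if_pos c2]
        have e : i + sstar + 1 = i + 1 + sstar := by omega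
        rw [e, (hβs (i + 1) (by omega) c2).2, hγss (i + 1) (by omega) c2]
        refine ⟨rfl, ?_⟩
        have := key _ (hγs (i + 1) (by omega) c2).2
        rw [← map_ne_zero (starRingEnd ℂ)] at this
        simpa using this
      · simp only [σ, if_neg c1, if_neg c2]
        obtain ⟨k, rfl⟩ : ∃ k, i = k + sstar := ⟨i - sstar, by omega⟩
        have e : k + sstar + 1 = k + 1 + sstar := by omega
        have hk1 : estar + hstar < k + 1 := by omega
        have hk2 : k + 1 ≤ estar + hstar + sstar := by omega
        rw [Nat.add_sub_cancel, e, (hβs (k + 1) hk1 hk2).1, hγss (k + 1) hk1 hk2]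
        refine ⟨?_, key _ (hγs (k + 1) hk1 hk2).2⟩
        simp [mul_comm]
  obtain ⟨hg, hg0, hg1⟩ := hγe 1 le_rfl hestar
  have hgg : γ 1 = ((γ 1).re : ℂ) := by
    apply Complex.ext <;> simp [hg]
  refine core_obstruction Γ (fun i => β (σ i + 1)) ?_ (fun i => (hβ i i.2).2) ⟨0, h0⟩ (γ 1).re
    hg0 hg1 ?_ ?_ ?_
  · ext i j
    rw [Matrix.mul_apply, Finset.sum_eq_single (⟨σ i, hσp i i.2⟩ : Fin p)]
    · rw [Matrix.map_apply, hΓ, hΓ, Matrix.diagonal_apply]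
      simp only [hσσ i i.2, if_true]
      by_cases c : i = j
      · subst c
        simp only [if_true]
        exact (hβ i i.2).1
      · have c' : ¬ (j : ℕ) = i := fun h => c (Fin.ext h.symm)
        simp [c, c']
    · intro k _ hk
      have hk' : ¬ (k : ℕ) = σ i := fun h => hk (Fin.ext h)
      rw [Matrix.map_apply, hΓ, if_neg hk', map_zero, zero_mul]
    · simp
  · simp only [hσ0, zero_add]
    rw [hβeh 1 le_rfl (by omega), ← hgg]
  · intro j hj
    simp only [hσ0, zero_add]
    have hj' : (j : ℕ) ≠ 0 := fun h => hj (Fin.ext h)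
    have hs : σ j ≠ 0 := by
      intro h
      have := hσσ j j.2
      rw [h, hσ0] at this
      exact hj' this.symm
    have := hσp j j.2
    exact hdist _ _ (by omega) (by omega) le_rfl (by omega) (by omega)
  · intro j
    rw [hΓ, ← hgg]
    by_cases c : j = ⟨0, h0⟩
    · subst c; simp [hσ0]
    · have hj' : (j : ℕ) ≠ 0 := fun h => c (Fin.ext h)
      have hs : ¬ 0 = σ j := by
        intro h
        have := hσσ j j.2
        rw [← h, hσ0] at this
        exact hj' this.symm
      simp [c, hs]
end
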